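/- Extension criterion: Let (r, m, φ) be the maximal development on D of characteristic initial conditions with parameters C, M, m₀ (maximal meaning: any solution on a relatively open past set D̃ ⊆ Q_R containing the initial rays and attaining the same data satisfies D̃ ⊆ D and agrees with (r, m, φ) on D̃), and assume R > 2M. Let p = (u₀, v₀) ∈ Q_R and set J⁻(p) = {(ũ, ṽ) ∈ Q_R : ũ ≥ u₀, ṽ ≤ v₀}. If J⁻(p) ∖ {p} ⊆ D and both sup{r(q) : q ∈ J⁻(p) ∖ {p}} < ∞ and sup{m(q) : q ∈ J⁻(p) ∖ {p}} < ∞, then p ∈ D. -/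

import Mathlib

/-!
The system is rewritten so that the mass disappears and the right-hand sides become smooth functions
of the unknowns. With `κ = λ / (1 - μ)` put `a = rλ`, `k = log κ`, `l = log (-rν)`, `w = log r`. Then

* `∂ᵤ a = -e^(l + k - w)`, `∂ᵤ k = -ζ² e^(-l)`, `∂ᵤ θ = -ζ a e^(-2w)`,
* `∂ᵥ l = e^(k - w)`, `∂ᵥ ζ = θ e^(l - 2w)`, `∂ᵥ w = a e^(-2w)`,

together with the constraints `∂ᵤ w = -e^(l - 2w)` and `∂ᵥ m = θ² / (2κ)`, which propagate from the
initial segments. The logarithms make sense on the whole development: since `R > 2M ≥ 2m₀`, `1 - μ` is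
positive at the corner, and it never vanishes, so it is positive; `λ > 0` and `ν < 0` then follow from
their linear equations (`signs`). `regOld` and `RegSys.exists_sol` pass from the field equations to
the regularized system and back. In the second direction a continuous solution with `C¹` data is first
shown to be `C¹` (`RegSys.partials`), after which `r`, `m`, `φ` are `C²`.

Local existence (`exists_local`) is Picard iteration for the characteristic problem, with a lifespan
that depends only on a bound for the data. The substance of the criterion is therefore the a priori
bound `apriori`: if `r` is bounded in the past of `p`, so are all six unknowns. Indeed `r ≥ R`,
`-rν ≥ R` and `rλ ≥ R` by monotonicity. If `S` is the maximum of `|ζ| / (e^l r²)` and `|θ| / (a r²)` on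
a past rectangle, then `|∂ᵥζ| ≤ S a e^l` and `|∂ᵤθ| ≤ S a e^l`. Here `2a = ∂ᵥ(r²)`, `2e^l = -∂ᵤ(r²)`, and
`l` is monotone in `v` while `a` is monotone in `u`, so integration gives `S ≤ A / R³ + S / 2`, where `A`
bounds the data. Thus `|ζ| ≤ X e^l` and `|θ| ≤ X a`; hence `|∂ᵤ k| ≤ X² e^l = -(X² / 2) ∂ᵤ(r²)`, which
bounds `k`, and the equations for `l` and `a` bound the rest.

Finally (`extend`) the characteristic problem is solved from a corner slightly to the past of `p`, with
data taken from the development along segments reaching slightly beyond the past of `p`. The solution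
exists in a neighbourhood of `p`, coincides with the development on the overlap (`agree`, from
`unique_char`), and the union is a solution on a past set containing `p`. By maximality this set is
contained in `D`.
-/

open Set Real

noncomputable section

/-- The quadrant `Q_R = (-∞, -R] × [R, ∞)` in null coordinates `(u, v)`. -/
def Quad (R : ℝ) : Set (ℝ × ℝ) := Iic (-R) ×ˢ Ici R

/-- Partial derivative in the `u` (first) direction, within the set `D`. -/
def pdu (D : Set (ℝ × ℝ)) (f : ℝ × ℝ → ℝ) (p : ℝ × ℝ) : ℝ :=
  fderivWithin ℝ f D p (1, 0)

/-- Partial derivative in the `v` (second) direction, within the set `D`. -/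
def pdv (D : Set (ℝ × ℝ)) (f : ℝ × ℝ → ℝ) (p : ℝ × ℝ) : ℝ :=
  fderivWithin ℝ f D p (0, 1)

/-- `D` is a past set in `Q_R`: with `(u,v) ∈ D`, any `(ũ,ṽ) ∈ Q_R` with
`ũ ≥ u`, `ṽ ≤ v` lies in `D`. -/
def IsPastSet (R : ℝ) (D : Set (ℝ × ℝ)) : Prop :=
  ∀ p ∈ D, ∀ q ∈ Quad R, p.1 ≤ q.1 → q.2 ≤ p.2 → q ∈ D

/-- A solution of the spherically symmetric Einstein–scalar field system on a
relatively open subset `D ⊆ Q_R`.  Writing `ν = ∂r/∂u`, `λ = ∂r/∂v`,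
`ζ = r ∂φ/∂u`, `θ = r ∂φ/∂v`, `μ = 2m/r`, the equations are:
`∂λ/∂u = λ (2ν/(1-μ)) (m/r²)`, `∂ν/∂v = ν (2λ/(1-μ)) (m/r²)`,
`ν ∂m/∂u = ½(1-μ)ζ²`, `λ ∂m/∂v = ½(1-μ)θ²`,
`∂θ/∂u = -ζλ/r`, `∂ζ/∂v = -θν/r`. -/
structure EFSol (R : ℝ) (D : Set (ℝ × ℝ)) (r m φ : ℝ × ℝ → ℝ) : Prop where
  subset : D ⊆ Quad R
  relOpen : ∃ U : Set (ℝ × ℝ), IsOpen U ∧ D = U ∩ Quad R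
  hr : ContDiffOn ℝ 2 r D
  hm : ContDiffOn ℝ 2 m D
  hphi : ContDiffOn ℝ 2 φ D
  rpos : ∀ p ∈ D, 0 < r p
  mu_ne : ∀ p ∈ D, 2 * m p ≠ r p
  eq_lam : ∀ p ∈ D, pdu D (fun q => pdv D r q) p
      = pdv D r p * (2 * pdu D r p / (1 - 2 * m p / r p)) * (m p / (r p) ^ 2)
  eq_nu : ∀ p ∈ D, pdv D (fun q => pdu D r q) p
      = pdu D r p * (2 * pdv D r p / (1 - 2 * m p / r p)) * (m p / (r p) ^ 2)
  eq_mu : ∀ p ∈ D, pdu D r p * pdu D m p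
      = (1 / 2) * (1 - 2 * m p / r p) * (r p * pdu D φ p) ^ 2
  eq_mv : ∀ p ∈ D, pdv D r p * pdv D m p
      = (1 / 2) * (1 - 2 * m p / r p) * (r p * pdv D φ p) ^ 2
  eq_theta : ∀ p ∈ D, pdu D (fun q => r q * pdv D φ q) p
      = -(r p * pdu D φ p) * pdv D r p / r p
  eq_zeta : ∀ p ∈ D, pdv D (fun q => r q * pdu D φ q) p
      = -(r p * pdv D φ p) * pdu D r p / r p

/-- Characteristic initial conditions with parameters `C`, `M`, `m₀`, posed on the
rays `{-R} × [R,∞)` (where `λ = 1`, `|rφ| ≤ C`, `m ≤ M`) and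
`(-∞,-R] × {R}` (where `ν = -1`, `|∂_u(rφ)| ≤ C/u²`, `m ≤ M`), with
`r(-R,R) = R` and `m(-R,R) = m₀`, on a past set `D`. -/
structure CharIC (R C M m₀ : ℝ) (D : Set (ℝ × ℝ)) (r m φ : ℝ × ℝ → ℝ) : Prop where
  past : IsPastSet R D
  ray_out : ∀ v ≥ R, ((-R, v) : ℝ × ℝ) ∈ D
  ray_in : ∀ u ≤ -R, ((u, R) : ℝ × ℝ) ∈ D
  r_corner : r (-R, R) = R
  m_corner : m (-R, R) = m₀
  lam_one : ∀ v ≥ R, pdv D r (-R, v) = 1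
  rphi_bound : ∀ v ≥ R, |r (-R, v) * φ (-R, v)| ≤ C
  m_bound_out : ∀ v ≥ R, m (-R, v) ≤ M
  nu_one : ∀ u ≤ -R, pdu D r (u, R) = -1
  durphi_bound : ∀ u ≤ -R, |pdu D (fun q => r q * φ q) (u, R)| ≤ C / u ^ 2
  m_bound_in : ∀ u ≤ -R, m (u, R) ≤ M

end

open Set Real

/-- `(r, m, φ)` on `D` is the maximal development of its characteristic data:
any solution on a relatively open past set `D' ⊆ Q_R` containing the initial
rays and attaining the same data (the values of `r`, `m`, `φ` on both rays)
satisfies `D' ⊆ D` and agrees with `(r, m, φ)` on `D'`. -/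
def IsMaximalDev (R : ℝ) (D : Set (ℝ × ℝ)) (r m φ : ℝ × ℝ → ℝ) : Prop :=
  ∀ D' : Set (ℝ × ℝ), ∀ r' m' φ' : ℝ × ℝ → ℝ,
    IsPastSet R D' → (∀ v ≥ R, ((-R, v) : ℝ × ℝ) ∈ D') →
    (∀ u ≤ -R, ((u, R) : ℝ × ℝ) ∈ D') →
    EFSol R D' r' m' φ' →
    (∀ v ≥ R, r' (-R, v) = r (-R, v) ∧ m' (-R, v) = m (-R, v) ∧
      φ' (-R, v) = φ (-R, v)) →
    (∀ u ≤ -R, r' (u, R) = r (u, R) ∧ m' (u, R) = m (u, R) ∧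
      φ' (u, R) = φ (u, R)) →
    D' ⊆ D ∧ EqOn r' r D' ∧ EqOn m' m D' ∧ EqOn φ' φ D'

section

open Function Topology Filter

/-! ### Regularity from transport equations -/

/-- An open coordinate rectangle `(a, b) × (c, e)`. -/
abbrev ORect (a b c e : ℝ) : Set (ℝ × ℝ) := Ioo a b ×ˢ Ioo c e

theorem isOpen_orect (a b c e : ℝ) : IsOpen (ORect a b c e) := isOpen_Ioo.prod isOpen_Ioo

theorem continuousOn_swap {a b c e : ℝ} {f : ℝ → ℝ → ℝ}
    (h : ContinuousOn (uncurry f) (ORect a b c e)) :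
    ContinuousOn (uncurry fun v u => f u v) (ORect c e a b) := by
  have : (uncurry fun v u => f u v) = uncurry f ∘ Prod.swap := by
    ext ⟨x, y⟩; rfl
  rw [this]
  refine h.comp continuous_swap.continuousOn ?_
  rintro ⟨x, y⟩ ⟨hx, hy⟩
  exact ⟨hy, hx⟩

/-- Continuous partial derivatives give Fréchet differentiability. -/
theorem hasFDerivAt_of_partials {a b c e : ℝ} {f fu fv : ℝ → ℝ → ℝ}
    (hu : ∀ u ∈ Ioo a b, ∀ v ∈ Ioo c e, HasDerivAt (fun s => f s v) (fu u v) u)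
    (hv : ∀ u ∈ Ioo a b, ∀ v ∈ Ioo c e, HasDerivAt (fun s => f u s) (fv u v) v)
    (cu : ContinuousOn (uncurry fu) (ORect a b c e))
    (cv : ContinuousOn (uncurry fv) (ORect a b c e))
    {q : ℝ × ℝ} (hq : q ∈ ORect a b c e) :
    HasFDerivAt (uncurry f) (fu q.1 q.2 • ContinuousLinearMap.fst ℝ ℝ ℝ
      + fv q.1 q.2 • ContinuousLinearMap.snd ℝ ℝ ℝ) q := by
  have hn := (isOpen_orect a b c e).mem_nhds hq
  have key := hasStrictFDerivAt_uncurry_coprod (𝕜 := ℝ) (u := q) (f := f)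
    (f₁ := fun u v => (fu u v) • (1 : ℝ →L[ℝ] ℝ)) (f₂ := fun u v => (fv u v) • (1 : ℝ →L[ℝ] ℝ))
    (by
      filter_upwards [hn] with x hx
      refine (hu x.1 hx.1 x.2 hx.2).hasFDerivAt.congr_fderiv ?_
      ext; simp [HasUncurry.uncurry])
    (by
      filter_upwards [hn] with x hx
      refine (hv x.1 hx.1 x.2 hx.2).hasFDerivAt.congr_fderiv ?_
      ext; simp [HasUncurry.uncurry])
    (by
      have := (cu.continuousAt hn)
      exact this.smul continuousAt_const)
    (by
      have := (cv.continuousAt hn)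
      exact this.smul continuousAt_const)
  refine key.hasFDerivAt.congr_fderiv ?_
  ext <;> simp [HasUncurry.uncurry]

/-- A function whose two partial derivatives are `Cⁿ` is `Cⁿ⁺¹`. -/
theorem contDiffOn_of_partials {a b c e : ℝ} {f fu fv : ℝ → ℝ → ℝ} {n : ℕ}
    (hu : ∀ u ∈ Ioo a b, ∀ v ∈ Ioo c e, HasDerivAt (fun s => f s v) (fu u v) u)
    (hv : ∀ u ∈ Ioo a b, ∀ v ∈ Ioo c e, HasDerivAt (fun s => f u s) (fv u v) v)
    (cu : ContDiffOn ℝ n (uncurry fu) (ORect a b c e))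
    (cv : ContDiffOn ℝ n (uncurry fv) (ORect a b c e)) :
    ContDiffOn ℝ (n + 1) (uncurry f) (ORect a b c e) := by
  have key := fun q hq => hasFDerivAt_of_partials hu hv cu.continuousOn cv.continuousOn (q := q) hq
  rw [contDiffOn_succ_iff_fderiv_of_isOpen (isOpen_orect a b c e)]
  refine ⟨fun q hq => (key q hq).differentiableAt.differentiableWithinAt, by simp, ?_⟩
  have : ContDiffOn ℝ n (fun q : ℝ × ℝ => fu q.1 q.2 • ContinuousLinearMap.fst ℝ ℝ ℝ
      + fv q.1 q.2 • ContinuousLinearMap.snd ℝ ℝ ℝ) (ORect a b c e) :=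
    (ContDiffOn.smul cu contDiffOn_const).add (ContDiffOn.smul cv contDiffOn_const)
  exact this.congr fun q hq => (key q hq).fderiv

/-- A primitive in the first variable of a continuous function is jointly continuous. -/
theorem continuousOn_primitive {a b c e u₁ : ℝ} {g : ℝ → ℝ → ℝ} (hu₁ : u₁ ∈ Ioo a b)
    (hg : ContinuousOn (uncurry g) (ORect a b c e)) :
    ContinuousOn (uncurry fun u v => ∫ s in u₁..u, g s v) (ORect a b c e) := by
  rintro ⟨u, v⟩ ⟨hu, hv⟩
  simp only [mem_Ioo] at hu hv hu₁
  obtain ⟨a', ha, ha'⟩ := exists_between (lt_min hu.1 hu₁.1)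
  obtain ⟨b', hb', hb⟩ := exists_between (max_lt hu.2 hu₁.2)
  obtain ⟨c', hc, hc'⟩ := exists_between hv.1
  obtain ⟨e', he', he⟩ := exists_between hv.2
  rw [lt_min_iff] at ha'
  rw [max_lt_iff] at hb'
  have hab : a' ≤ b' := by linarith
  have hce : c' ≤ e' := by linarith
  -- replace `g` by its composition with the projection onto a compact subrectangle
  set G : ℝ → ℝ → ℝ := fun s t => g (projIcc a' b' hab s) (projIcc c' e' hce t) with hG
  have hGc : Continuous (uncurry fun (q : ℝ × ℝ) (s : ℝ) => G s q.2) := by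
    have h1 : Continuous (fun x : (ℝ × ℝ) × ℝ =>
        (((projIcc a' b' hab x.2 : ℝ), (projIcc c' e' hce x.1.2 : ℝ)) : ℝ × ℝ)) := by fun_prop
    have := hg.comp_continuous h1 (fun x => by
      have p1 := (projIcc a' b' hab x.2).2
      have p2 := (projIcc c' e' hce x.1.2).2
      simp only [mem_Icc] at p1 p2
      refine ⟨⟨?_, ?_⟩, ⟨?_, ?_⟩⟩ <;> dsimp only <;> linarith)
    exact this
  have hcont : Continuous (fun q : ℝ × ℝ => ∫ s in u₁..q.1, G s q.2) :=
    intervalIntegral.continuous_parametric_intervalIntegral_of_continuous hGc continuous_fst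
  apply ContinuousAt.continuousWithinAt
  apply hcont.continuousAt.congr
  have hO : Ioo a' b' ×ˢ Ioo c' e' ∈ 𝓝 (u, v) :=
    (isOpen_Ioo.prod isOpen_Ioo).mem_nhds ⟨⟨ha'.1, hb'.1⟩, ⟨hc', he'⟩⟩
  filter_upwards [hO]
  rintro ⟨x, y⟩ ⟨hx, hy⟩
  simp only [mem_Ioo] at hx hy
  apply intervalIntegral.integral_congr
  intro s hs
  have hs' : s ∈ Icc a' b' := by
    have : uIcc u₁ x ⊆ Icc a' b' :=
      uIcc_subset_Icc ⟨ha'.2.le, hb'.2.le⟩ ⟨hx.1.le, hx.2.le⟩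
    exact this hs
  simp [hG, projIcc_of_mem hab hs', projIcc_of_mem hce ⟨hy.1.le, hy.2.le⟩]

theorem mem_Ioo_of_uIcc {a b u₁ u s : ℝ} (h₁ : u₁ ∈ Ioo a b) (h : u ∈ Ioo a b)
    (hs : s ∈ uIcc u₁ u) : s ∈ Ioo a b := by
  rw [mem_uIcc] at hs
  simp only [mem_Ioo] at *
  rcases hs with hs | hs <;> constructor <;> linarith [hs.1, hs.2, h.1, h.2, h₁.1, h₁.2]

theorem continuousOn_slice {a b c e u₁ u v : ℝ} {g : ℝ → ℝ → ℝ} (hu₁ : u₁ ∈ Ioo a b)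
    (hu : u ∈ Ioo a b) (hv : v ∈ Ioo c e) (hg : ContinuousOn (uncurry g) (ORect a b c e)) :
    ContinuousOn (fun s => g s v) (uIcc u₁ u) := by
  have : (fun s => g s v) = uncurry g ∘ fun s => (s, v) := rfl
  rw [this]
  refine hg.comp (by fun_prop) fun s hs => ⟨mem_Ioo_of_uIcc hu₁ hu hs, hv⟩

/-- Transverse regularity: if `∂ᵤ f = g`, and both `g` and the datum `f(u₁, ·)` are `C¹` in `v`,
then `f` is `C¹` in `v`, and `∂ᵤ ∂ᵥ f = ∂ᵥ g`. -/
theorem transverse {a b c e u₁ : ℝ} {f g gv : ℝ → ℝ → ℝ} {d : ℝ → ℝ} (hu₁ : u₁ ∈ Ioo a b)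
    (hf : ∀ u ∈ Ioo a b, ∀ v ∈ Ioo c e, HasDerivAt (fun s => f s v) (g u v) u)
    (hg : ContinuousOn (uncurry g) (ORect a b c e))
    (hgv : ∀ u ∈ Ioo a b, ∀ v ∈ Ioo c e, HasDerivAt (fun s => g u s) (gv u v) v)
    (hgvc : ContinuousOn (uncurry gv) (ORect a b c e))
    (hd : ∀ v ∈ Ioo c e, HasDerivAt (fun s => f u₁ s) (d v) v)
    (hdc : ContinuousOn d (Ioo c e)) :
    ∃ fv : ℝ → ℝ → ℝ,
      (∀ u ∈ Ioo a b, ∀ v ∈ Ioo c e, HasDerivAt (fun s => f u s) (fv u v) v) ∧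
      ContinuousOn (uncurry fv) (ORect a b c e) ∧
      (∀ u ∈ Ioo a b, ∀ v ∈ Ioo c e, HasDerivAt (fun s => fv s v) (gv u v) u) ∧
      ∀ v, fv u₁ v = d v := by
  refine ⟨fun u v => d v + ∫ s in u₁..u, gv s v, ?_, ?_, ?_, ?_⟩
  · intro u hu v hv
    -- the representation of `f` by its datum and the integral of `g`
    have hrep : ∀ t ∈ Ioo c e, f u t = f u₁ t + ∫ s in u₁..u, g s t := by
      intro t ht
      rw [intervalIntegral.integral_eq_sub_of_hasDerivAt
        (fun s hs => hf s (mem_Ioo_of_uIcc hu₁ hu hs) t ht)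
        (continuousOn_slice hu₁ hu ht hg).intervalIntegrable]
      ring
    obtain ⟨c', hc, hc'⟩ := exists_between hv.1
    obtain ⟨e', he', he⟩ := exists_between hv.2
    have hsub : uIcc u₁ u ×ˢ Icc c' e' ⊆ ORect a b c e := by
      rintro ⟨x, y⟩ ⟨hx, hy⟩
      exact ⟨mem_Ioo_of_uIcc hu₁ hu hx, lt_of_lt_of_le hc hy.1, lt_of_le_of_lt hy.2 he⟩
    obtain ⟨K, hK⟩ := (isCompact_uIcc.prod isCompact_Icc).exists_bound_of_continuousOn
      (hgvc.mono hsub)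
    have hI := intervalIntegral.hasDerivAt_integral_of_dominated_loc_of_deriv_le
      (μ := MeasureTheory.volume) (a := u₁) (b := u) (F := fun t s => g s t)
      (F' := fun t s => gv s t) (x₀ := v) (s := Ioo c' e') (bound := fun _ => K)
      (Ioo_mem_nhds hc' he')
      (by
        filter_upwards [Ioo_mem_nhds hv.1 hv.2] with t ht
        exact ((continuousOn_slice hu₁ hu ht hg).mono uIoc_subset_uIcc).aestronglyMeasurable
          measurableSet_uIoc)
      (continuousOn_slice hu₁ hu hv hg).intervalIntegrable
      (((continuousOn_slice hu₁ hu hv hgvc).mono uIoc_subset_uIcc).aestronglyMeasurable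
          measurableSet_uIoc)
      (Eventually.of_forall fun s hs t ht =>
        hK (s, t) ⟨uIoc_subset_uIcc hs, Ioo_subset_Icc_self ht⟩)
      (by simp)
      (Eventually.of_forall fun s hs t ht =>
        hgv s (mem_Ioo_of_uIcc hu₁ hu (uIoc_subset_uIcc hs)) t
          ⟨hc.trans ht.1, ht.2.trans he⟩)
    refine ((hd v hv).add hI.2).congr_of_eventuallyEq ?_
    filter_upwards [Ioo_mem_nhds hv.1 hv.2] with t ht using hrep t ht
  · have h1 : ContinuousOn (fun q : ℝ × ℝ => d q.2) (ORect a b c e) :=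
      hdc.comp continuous_snd.continuousOn fun q hq => hq.2
    exact h1.add (continuousOn_primitive hu₁ hgvc)
  · intro u hu v hv
    have hc : ContinuousOn (fun s => gv s v) (Ioo a b) :=
      hgvc.comp (f := fun s => (s, v)) (by fun_prop) fun s hs => ⟨hs, hv⟩
    have := intervalIntegral.integral_hasDerivAt_right
      (continuousOn_slice hu₁ hu hv hgvc).intervalIntegrable
      (hc.stronglyMeasurableAtFilter isOpen_Ioo u hu)
      (hc.continuousAt (Ioo_mem_nhds hu.1 hu.2))
    exact this.const_add _
  · intro v; simp

/-- Two functions on an open interval with equal derivatives that agree at one point agree. -/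
theorem eq_of_hasDerivAt_eq {c e v₁ : ℝ} {f g d : ℝ → ℝ} (hv₁ : v₁ ∈ Ioo c e)
    (hf : ∀ v ∈ Ioo c e, HasDerivAt f (d v) v) (hg : ∀ v ∈ Ioo c e, HasDerivAt g (d v) v)
    (h : f v₁ = g v₁) {v : ℝ} (hv : v ∈ Ioo c e) : f v = g v := by
  have hd : ∀ x ∈ Ioo c e, HasDerivAt (fun x => f x - g x) 0 x := fun x hx =>
    ((hf x hx).fun_sub (hg x hx)).congr_deriv (sub_self _)
  have := isOpen_Ioo.is_const_of_deriv_eq_zero (convex_Ioo c e).isPreconnected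
    (f := fun x => f x - g x) (fun x hx => (hd x hx).differentiableAt.differentiableWithinAt)
    (fun x hx => (hd x hx).deriv) hv hv₁
  simp only [h, sub_self] at this
  linarith

/-! ### The characteristic initial value problem -/

/-- Projection of the line onto the interval of radius `ε` about `x₀`. -/
def clampTo (x₀ ε x : ℝ) : ℝ := max (x₀ - ε) (min (x₀ + ε) x)

theorem continuous_clampTo (x₀ ε : ℝ) : Continuous (clampTo x₀ ε) := by
  unfold clampTo; fun_prop

theorem clampTo_of_mem {x₀ ε x : ℝ} (h : |x - x₀| ≤ ε) : clampTo x₀ ε x = x := by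
  rw [abs_le] at h
  unfold clampTo
  rw [min_eq_right (by linarith), max_eq_right (by linarith)]

theorem abs_clampTo_le {x₀ ε : ℝ} (hε : 0 ≤ ε) (x : ℝ) : |clampTo x₀ ε x - x₀| ≤ ε := by
  unfold clampTo
  rw [abs_le]
  constructor
  · linarith [le_max_left (x₀ - ε) (min (x₀ + ε) x)]
  · have : max (x₀ - ε) (min (x₀ + ε) x) ≤ x₀ + ε :=
      max_le (by linarith) (min_le_left _ _)
    linarith

section Existence
variable {E₁ E₂ : Type*} [NormedAddCommGroup E₁] [NormedSpace ℝ E₁] [CompleteSpace E₁]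
  [NormedAddCommGroup E₂] [NormedSpace ℝ E₂] [CompleteSpace E₂]

/-- Characteristic initial value problem `∂ᵤ X = F(X, Y)`, `∂ᵥ Y = G(X, Y)` in integrated form, for
bounded and globally Lipschitz `F`, `G`: Picard iteration is a contraction on bounded continuous
functions on the plane once the integrals are cut off at distance `ε` from the data. -/
theorem exists_picard {F : E₁ × E₂ → E₁} {G : E₁ × E₂ → E₂} {L : NNReal} {B N ε u₁ v₁ : ℝ}
    (hF : LipschitzWith L F) (hG : LipschitzWith L G)
    (hFB : ∀ z, ‖F z‖ ≤ B) (hGB : ∀ z, ‖G z‖ ≤ B) (hε : 0 ≤ ε) (hLε : L * ε < 1)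
    {X₀ : ℝ → E₁} {Y₀ : ℝ → E₂} (hX₀ : Continuous X₀) (hY₀ : Continuous Y₀)
    (hX₀N : ∀ v, ‖X₀ v‖ ≤ N) (hY₀N : ∀ u, ‖Y₀ u‖ ≤ N) :
    ∃ Z : ℝ × ℝ → E₁ × E₂, Continuous Z ∧ (∀ q, ‖Z q‖ ≤ N + B * ε) ∧
      (∀ u v, |u - u₁| ≤ ε → (Z (u, v)).1 = X₀ v + ∫ s in u₁..u, F (Z (s, v))) ∧
      (∀ u v, |v - v₁| ≤ ε → (Z (u, v)).2 = Y₀ u + ∫ s in v₁..v, G (Z (u, s))) := by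
  have hB0 : 0 ≤ B := (norm_nonneg _).trans (hFB 0)
  set T : (ℝ × ℝ → E₁ × E₂) → ℝ × ℝ → E₁ × E₂ := fun Z q =>
    (X₀ q.2 + ∫ s in u₁..clampTo u₁ ε q.1, F (Z (s, q.2)),
     Y₀ q.1 + ∫ s in v₁..clampTo v₁ ε q.2, G (Z (q.1, s))) with hT
  have hTc : ∀ Z, Continuous Z → Continuous (T Z) := by
    intro Z hZ
    have h1 : Continuous (fun q : ℝ × ℝ => ∫ s in u₁..clampTo u₁ ε q.1, F (Z (s, q.2))) := by
      apply intervalIntegral.continuous_parametric_intervalIntegral_of_continuous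
        (f := fun (q : ℝ × ℝ) s => F (Z (s, q.2)))
      · exact hF.continuous.comp (hZ.comp (by fun_prop))
      · exact (continuous_clampTo _ _).comp continuous_fst
    have h2 : Continuous (fun q : ℝ × ℝ => ∫ s in v₁..clampTo v₁ ε q.2, G (Z (q.1, s))) := by
      apply intervalIntegral.continuous_parametric_intervalIntegral_of_continuous
        (f := fun (q : ℝ × ℝ) s => G (Z (q.1, s)))
      · exact hG.continuous.comp (hZ.comp (by fun_prop))
      · exact (continuous_clampTo _ _).comp continuous_snd
    exact ((hX₀.comp continuous_snd).add h1).prodMk ((hY₀.comp continuous_fst).add h2)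
  have hTb : ∀ Z q, ‖T Z q‖ ≤ N + B * ε := by
    intro Z q
    rw [Prod.norm_def]
    refine max_le ((norm_add_le _ _).trans (add_le_add (hX₀N _) ?_))
      ((norm_add_le _ _).trans (add_le_add (hY₀N _) ?_))
    · refine (intervalIntegral.norm_integral_le_of_norm_le_const fun s _ => hFB _).trans ?_
      exact mul_le_mul_of_nonneg_left (abs_clampTo_le hε _) hB0
    · refine (intervalIntegral.norm_integral_le_of_norm_le_const fun s _ => hGB _).trans ?_
      exact mul_le_mul_of_nonneg_left (abs_clampTo_le hε _) hB0
  let TB : BoundedContinuousFunction (ℝ × ℝ) (E₁ × E₂) →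
      BoundedContinuousFunction (ℝ × ℝ) (E₁ × E₂) := fun Z =>
    BoundedContinuousFunction.ofNormedAddCommGroup (T Z) (hTc Z Z.continuous) _ (hTb Z)
  have hcontr : ContractingWith (L * ⟨ε, hε⟩) TB := by
    refine ⟨by exact_mod_cast hLε, LipschitzWith.of_dist_le_mul fun Z W => ?_⟩
    have hK : 0 ≤ ((L * ⟨ε, hε⟩ : NNReal) : ℝ) * dist Z W := by positivity
    rw [BoundedContinuousFunction.dist_le hK]
    intro q
    have e : ((L * ⟨ε, hε⟩ : NNReal) : ℝ) * dist Z W = (L * dist Z W) * ε := by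
      exact mul_right_comm (L : ℝ) ε (dist Z W)
    rw [e]
    change dist (T Z q) (T W q) ≤ _
    rw [Prod.dist_eq]
    refine max_le ?_ ?_
    · simp only [hT]
      rw [dist_add_left, dist_eq_norm, ← intervalIntegral.integral_sub]
      · refine (intervalIntegral.norm_integral_le_of_norm_le_const
          (C := L * dist Z W) fun s _ => ?_).trans ?_
        · rw [← dist_eq_norm]
          exact (hF.dist_le_mul _ _).trans (mul_le_mul_of_nonneg_left
            (BoundedContinuousFunction.dist_coe_le_dist _) L.2)
        · exact mul_le_mul_of_nonneg_left (abs_clampTo_le hε _) (by positivity)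
      · exact (hF.continuous.comp (Z.continuous.comp (by fun_prop))).intervalIntegrable _ _
      · exact (hF.continuous.comp (W.continuous.comp (by fun_prop))).intervalIntegrable _ _
    · simp only [hT]
      rw [dist_add_left, dist_eq_norm, ← intervalIntegral.integral_sub]
      · refine (intervalIntegral.norm_integral_le_of_norm_le_const
          (C := L * dist Z W) fun s _ => ?_).trans ?_
        · rw [← dist_eq_norm]
          exact (hG.dist_le_mul _ _).trans (mul_le_mul_of_nonneg_left
            (BoundedContinuousFunction.dist_coe_le_dist _) L.2)
        · exact mul_le_mul_of_nonneg_left (abs_clampTo_le hε _) (by positivity)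
      · exact (hG.continuous.comp (Z.continuous.comp (by fun_prop))).intervalIntegrable _ _
      · exact (hG.continuous.comp (W.continuous.comp (by fun_prop))).intervalIntegrable _ _
  obtain ⟨Z, hZ⟩ : ∃ Z, TB Z = Z := ⟨_, hcontr.fixedPoint_isFixedPt⟩
  have hZq : ∀ q, T Z q = Z q := fun q => DFunLike.congr_fun hZ q
  refine ⟨Z, Z.continuous, fun q => hZq q ▸ hTb Z q, fun u v hu => ?_, fun u v hv => ?_⟩
  · rw [← hZq (u, v)]
    simp only [hT, clampTo_of_mem hu]
  · rw [← hZq (u, v)]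
    simp only [hT, clampTo_of_mem hv]

end Existence

section Uniqueness
variable {E₁ E₂ : Type*} [NormedAddCommGroup E₁] [NormedSpace ℝ E₁]
  [NormedAddCommGroup E₂] [NormedSpace ℝ E₂]

/-- Integrating an exponential bound on the derivative gains a factor `1 / K`; this is what makes the
weighted norm in the uniqueness argument contract. -/
theorem le_weight_of_deriv {E : Type*} [NormedAddCommGroup E] [NormedSpace ℝ E] {f f' : ℝ → E}
    {a b c K : ℝ} (hK : 0 < K) (hc : 0 ≤ c) (hf : ∀ x ∈ Icc a b, HasDerivWithinAt f (f' x) (Icc a b) x)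
    (h0 : f a = 0) (hb : ∀ x ∈ Icc a b, ‖f' x‖ ≤ c * exp (K * (x - a))) {x : ℝ} (hx : x ∈ Icc a b) :
    ‖f x‖ ≤ c / K * exp (K * (x - a)) := by
  refine image_norm_le_of_norm_deriv_right_le_deriv_boundary
    (B := fun x => c / K * exp (K * (x - a))) (B' := fun x => c * exp (K * (x - a)))
    (fun x hx => (hf x hx).continuousWithinAt)
    (fun x hx => (hf x (Ico_subset_Icc_self hx)).mono_of_mem_nhdsWithin
      (Icc_mem_nhdsGE_of_mem hx)) ?_ ?_
    (fun x hx => hb x (Ico_subset_Icc_self hx)) hx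
  · rw [h0, norm_zero]; positivity
  · intro x
    have h1 : HasDerivAt (fun x => K * (x - a)) K x := by
      simpa using ((hasDerivAt_id x).sub_const a).const_mul K
    refine (h1.exp.const_mul (c / K)).congr_deriv ?_
    field_simp

/-- Uniqueness for the characteristic problem on a compact rectangle `[a, b] × [c, e]`, with data on
the sides `u = b` and `v = c`. -/
theorem unique_char {F : E₁ × E₂ → E₁} {G : E₁ × E₂ → E₂} {L : NNReal} {S : Set (E₁ × E₂)}
    (hF : LipschitzOnWith L F S) (hG : LipschitzOnWith L G S) {a b c e : ℝ}
    (hab : a ≤ b) (hce : c ≤ e)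
    {Z W : ℝ × ℝ → E₁ × E₂} (hZc : ContinuousOn Z (Icc a b ×ˢ Icc c e))
    (hWc : ContinuousOn W (Icc a b ×ˢ Icc c e))
    (hZS : ∀ q ∈ Icc a b ×ˢ Icc c e, Z q ∈ S) (hWS : ∀ q ∈ Icc a b ×ˢ Icc c e, W q ∈ S)
    (hZu : ∀ u ∈ Icc a b, ∀ v ∈ Icc c e,
      HasDerivWithinAt (fun s => (Z (s, v)).1) (F (Z (u, v))) (Icc a b) u)
    (hWu : ∀ u ∈ Icc a b, ∀ v ∈ Icc c e,
      HasDerivWithinAt (fun s => (W (s, v)).1) (F (W (u, v))) (Icc a b) u)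
    (hZv : ∀ u ∈ Icc a b, ∀ v ∈ Icc c e,
      HasDerivWithinAt (fun s => (Z (u, s)).2) (G (Z (u, v))) (Icc c e) v)
    (hWv : ∀ u ∈ Icc a b, ∀ v ∈ Icc c e,
      HasDerivWithinAt (fun s => (W (u, s)).2) (G (W (u, v))) (Icc c e) v)
    (h1 : ∀ v ∈ Icc c e, (Z (b, v)).1 = (W (b, v)).1)
    (h2 : ∀ u ∈ Icc a b, (Z (u, c)).2 = (W (u, c)).2) :
    ∀ q ∈ Icc a b ×ˢ Icc c e, Z q = W q := by
  -- the exponentially weighted difference attains its maximum `M`, and `M ≤ M / 2`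
  set K : ℝ := 2 * L + 1 with hK
  have hL0 : (0 : ℝ) ≤ L := L.2
  have hKpos : 0 < K := by positivity
  set w : ℝ × ℝ → ℝ := fun q => K * ((b - q.1) + (q.2 - c)) with hw
  obtain ⟨q₀, hq₀, hmax⟩ := (isCompact_Icc.prod isCompact_Icc).exists_isMaxOn
    (s := Icc a b ×ˢ Icc c e) ⟨(a, c), ⟨⟨le_rfl, hab⟩, ⟨le_rfl, hce⟩⟩⟩
    (f := fun q => ‖Z q - W q‖ * exp (-w q))
    (((hZc.sub hWc).norm).mul (by
      apply Continuous.continuousOn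
      simp only [hw]; fun_prop))
  set M := ‖Z q₀ - W q₀‖ * exp (-w q₀) with hM
  have hM0 : 0 ≤ M := by positivity
  have hle : ∀ q ∈ Icc a b ×ˢ Icc c e, ‖Z q - W q‖ ≤ M * exp (w q) := by
    intro q hq
    have : ‖Z q - W q‖ * exp (-w q) ≤ M := hmax hq
    rwa [exp_neg, ← div_eq_mul_inv, div_le_iff₀ (exp_pos _)] at this
  obtain ⟨u, v⟩ := q₀
  obtain ⟨hu, hv⟩ := hq₀
  simp only at hu hv
  have i1 : ‖(Z (u, v)).1 - (W (u, v)).1‖ ≤ L * M / K * exp (w (u, v)) := by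
    have := le_weight_of_deriv (a := 0) (b := b - u) (K := K) (c := L * M * exp (K * (v - c)))
      (f := fun t => (Z (b - t, v)).1 - (W (b - t, v)).1)
      (f' := fun t => -(F (Z (b - t, v)) - F (W (b - t, v)))) hKpos (by positivity) ?_ ?_ ?_
      (x := b - u) ⟨by linarith [hu.2], le_rfl⟩
    · simp only [sub_sub_cancel] at this
      refine this.trans (le_of_eq ?_)
      simp only [hw, mul_add, exp_add, sub_zero]
      ring
    · intro t ht
      have hm : MapsTo (fun t => b - t) (Icc 0 (b - u)) (Icc a b) := fun s hs =>
        ⟨by linarith [hs.2, hu.1], by linarith [hs.1]⟩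
      have hb : HasDerivWithinAt (fun t => b - t) (-1) (Icc 0 (b - u)) t :=
        ((hasDerivAt_id t).const_sub b).hasDerivWithinAt
      have := ((hZu _ (hm ht) v hv).sub (hWu _ (hm ht) v hv)).scomp t hb hm
      refine HasDerivWithinAt.congr_deriv this ?_
      simp
    · simp [h1 v hv]
    · intro t ht
      have hm : (b - t, v) ∈ Icc a b ×ˢ Icc c e :=
        ⟨⟨by linarith [ht.2, hu.1], by linarith [ht.1]⟩, hv⟩
      rw [norm_neg, ← dist_eq_norm]
      refine (hF.dist_le_mul _ (hZS _ hm) _ (hWS _ hm)).trans ?_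
      rw [dist_eq_norm]
      refine (mul_le_mul_of_nonneg_left (hle _ hm) hL0).trans (le_of_eq ?_)
      simp only [hw, mul_add, exp_add, sub_zero, sub_sub_cancel]
      ring
  have i2 : ‖(Z (u, v)).2 - (W (u, v)).2‖ ≤ L * M / K * exp (w (u, v)) := by
    have := le_weight_of_deriv (a := c) (b := e) (K := K) (c := L * M * exp (K * (b - u)))
      (f := fun t => (Z (u, t)).2 - (W (u, t)).2)
      (f' := fun t => G (Z (u, t)) - G (W (u, t))) hKpos (by positivity) ?_ ?_ ?_ hv
    · refine this.trans (le_of_eq ?_)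
      simp only [hw, mul_add, exp_add]
      ring
    · intro t ht
      exact (hZv u hu t ht).sub (hWv u hu t ht)
    · simp [h2 u hu]
    · intro t ht
      have hm : (u, t) ∈ Icc a b ×ˢ Icc c e := ⟨hu, ht⟩
      rw [← dist_eq_norm]
      refine (hG.dist_le_mul _ (hZS _ hm) _ (hWS _ hm)).trans ?_
      rw [dist_eq_norm]
      refine (mul_le_mul_of_nonneg_left (hle _ hm) hL0).trans (le_of_eq ?_)
      simp only [hw, mul_add, exp_add]
      ring
  have i3 : ‖Z (u, v) - W (u, v)‖ ≤ L * M / K * exp (w (u, v)) := by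
    rw [Prod.norm_def]
    exact max_le i1 i2
  have i4 : M ≤ L * M / K := by
    calc M ≤ (L * M / K * exp (w (u, v))) * exp (-w (u, v)) :=
          mul_le_mul_of_nonneg_right i3 (exp_pos _).le
      _ = L * M / K := by rw [mul_assoc, ← exp_add]; simp
  have hMz : M = 0 := by
    rw [le_div_iff₀ hKpos, hK] at i4
    nlinarith
  intro q hq
  have := hle q hq
  rw [hMz, zero_mul] at this
  exact sub_eq_zero.1 (norm_le_zero_iff.1 this)

end Uniqueness

/-! ### Local existence for the regularized vector fields -/

/-- The state space of one half of the first-order system. -/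
abbrev Vec3 : Type := ℝ × ℝ × ℝ

/-- Componentwise projection onto the box of radius `N`. -/
def clampBox (N : ℝ) (z : Vec3 × Vec3) : Vec3 × Vec3 :=
  ((clampTo 0 N z.1.1, clampTo 0 N z.1.2.1, clampTo 0 N z.1.2.2),
    (clampTo 0 N z.2.1, clampTo 0 N z.2.2.1, clampTo 0 N z.2.2.2))

theorem lipschitz_clampTo (x₀ ε : ℝ) : LipschitzWith 1 (clampTo x₀ ε) := by
  unfold clampTo
  exact (LipschitzWith.id.const_min _).const_max _

theorem lipschitz_clampBox (N : ℝ) : LipschitzWith 1 (clampBox N) := by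
  have h : ∀ x y, dist (clampTo 0 N x) (clampTo 0 N y) ≤ dist x y := fun x y => by
    simpa using (lipschitz_clampTo 0 N).dist_le_mul x y
  refine LipschitzWith.mk_one fun z w => ?_
  simp only [clampBox, Prod.dist_eq]
  exact max_le_max (max_le_max (h _ _) (max_le_max (h _ _) (h _ _)))
    (max_le_max (h _ _) (max_le_max (h _ _) (h _ _)))

theorem norm_vec_le {z : Vec3 × Vec3} {N : ℝ} : ‖z‖ ≤ N ↔
    (|z.1.1| ≤ N ∧ |z.1.2.1| ≤ N ∧ |z.1.2.2| ≤ N) ∧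
      (|z.2.1| ≤ N ∧ |z.2.2.1| ≤ N ∧ |z.2.2.2| ≤ N) := by
  simp only [Prod.norm_def, max_le_iff, Real.norm_eq_abs]

theorem norm_clampBox_le {N : ℝ} (hN : 0 ≤ N) (z : Vec3 × Vec3) : ‖clampBox N z‖ ≤ N := by
  have h : ∀ x, |clampTo 0 N x| ≤ N := fun x => by simpa using abs_clampTo_le (x₀ := 0) hN x
  exact norm_vec_le.2 ⟨⟨h _, h _, h _⟩, ⟨h _, h _, h _⟩⟩

theorem clampBox_of_norm_le {N : ℝ} {z : Vec3 × Vec3} (h : ‖z‖ ≤ N) : clampBox N z = z := by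
  rw [norm_vec_le] at h
  obtain ⟨⟨h1, h2, h3⟩, ⟨h4, h5, h6⟩⟩ := h
  have h : ∀ x, |x| ≤ N → clampTo 0 N x = x := fun x hx => clampTo_of_mem (by simpa using hx)
  simp only [clampBox, h _ h1, h _ h2, h _ h3, h _ h4, h _ h5, h _ h6]

/-- A `C¹` map is Lipschitz and bounded on every ball of the (finite-dimensional) state space. -/
theorem exists_lipschitz_bound {F : Vec3 × Vec3 → Vec3} (hF : ContDiff ℝ 1 F) (N : ℝ) :
    ∃ (L : NNReal) (B : ℝ), LipschitzOnWith L F (Metric.closedBall 0 N) ∧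
      ∀ z ∈ Metric.closedBall (0 : Vec3 × Vec3) N, ‖F z‖ ≤ B := by
  obtain ⟨L, hL⟩ := hF.contDiffOn.exists_lipschitzOnWith one_ne_zero (convex_closedBall 0 N)
    (isCompact_closedBall _ _)
  obtain ⟨B, hB⟩ := (isCompact_closedBall (0 : Vec3 × Vec3) N).exists_bound_of_continuousOn
    hF.continuous.continuousOn
  exact ⟨L, B, hL, hB⟩

/-- Local existence for the characteristic problem, with a lifespan `ε` that depends only on a
bound `N` for the data. -/
theorem exists_local {F G : Vec3 × Vec3 → Vec3} (hF : ContDiff ℝ 1 F) (hG : ContDiff ℝ 1 G)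
    {N : ℝ} (hN : 0 ≤ N) :
    ∃ ε > 0, ∀ (a b c e u₁ v₁ : ℝ) (X₀ Y₀ : ℝ → Vec3), u₁ ∈ Icc a b → v₁ ∈ Icc c e →
      b - u₁ ≤ ε → u₁ - a ≤ ε → e - v₁ ≤ ε → v₁ - c ≤ ε →
      ContinuousOn X₀ (Icc c e) → ContinuousOn Y₀ (Icc a b) →
      (∀ v ∈ Icc c e, ‖X₀ v‖ ≤ N) → (∀ u ∈ Icc a b, ‖Y₀ u‖ ≤ N) →
      ∃ Z : ℝ × ℝ → Vec3 × Vec3, Continuous Z ∧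
        (∀ q, ‖Z q‖ ≤ N + 1) ∧
        (∀ v ∈ Icc c e, (Z (u₁, v)).1 = X₀ v) ∧ (∀ u ∈ Icc a b, (Z (u, v₁)).2 = Y₀ u) ∧
        (∀ u ∈ Ioo a b, ∀ v ∈ Ioo c e, HasDerivAt (fun s => (Z (s, v)).1) (F (Z (u, v))) u) ∧
        (∀ u ∈ Ioo a b, ∀ v ∈ Ioo c e, HasDerivAt (fun s => (Z (u, s)).2) (G (Z (u, v))) v) := by
  obtain ⟨L₁, B₁, hL₁, hB₁⟩ := exists_lipschitz_bound hF (N + 1)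
  obtain ⟨L₂, B₂, hL₂, hB₂⟩ := exists_lipschitz_bound hG (N + 1)
  have hN1 : 0 ≤ N + 1 := by linarith
  have hmem : ∀ z, clampBox (N + 1) z ∈ Metric.closedBall (0 : Vec3 × Vec3) (N + 1) := fun z => by
    simpa using norm_clampBox_le hN1 z
  set L := max L₁ L₂ with hLdef
  set B := max (max B₁ B₂) 0 with hBdef
  have hB0 : 0 ≤ B := le_max_right _ _
  have hL0 : (0 : ℝ) ≤ L := L.2
  have lip : ∀ {H : Vec3 × Vec3 → Vec3} {K : NNReal}, K ≤ L →
      LipschitzOnWith K H (Metric.closedBall 0 (N + 1)) →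
      LipschitzWith L (fun z => H (clampBox (N + 1) z)) := by
    intro H K hK hH
    refine LipschitzWith.of_dist_le_mul fun z w => ?_
    refine (hH.dist_le_mul _ (hmem z) _ (hmem w)).trans ?_
    have := (lipschitz_clampBox (N + 1)).dist_le_mul z w
    rw [NNReal.coe_one, one_mul] at this
    exact mul_le_mul (NNReal.coe_le_coe.2 hK) this dist_nonneg hL0
  refine ⟨1 / (L + B + 1), by positivity, ?_⟩
  intro a b c e u₁ v₁ X₀ Y₀ hu₁ hv₁ e1 e2 e3 e4 hX₀ hY₀ hXN hYN
  set ε := 1 / ((L : ℝ) + B + 1) with hε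
  have hε0 : 0 ≤ ε := by positivity
  have hBε : B * ε ≤ 1 := by
    rw [hε, mul_one_div, div_le_one (by positivity)]; linarith
  have hLε : L * ε < 1 := by
    rw [hε, mul_one_div, div_lt_one (by positivity)]; linarith
  have hab : a ≤ b := hu₁.1.trans hu₁.2
  have hce : c ≤ e := hv₁.1.trans hv₁.2
  obtain ⟨Z, hZc, hZb, hZ1, hZ2⟩ := exists_picard (u₁ := u₁) (v₁ := v₁)
    (lip (le_max_left _ _) hL₁) (lip (le_max_right _ _) hL₂)
    (fun z => (hB₁ _ (hmem z)).trans ((le_max_left _ _).trans (le_max_left _ _)))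
    (fun z => (hB₂ _ (hmem z)).trans ((le_max_right _ _).trans (le_max_left _ _)))
    hε0 hLε
    (X₀ := IccExtend hce ((Icc c e).domRestrict X₀)) (Y₀ := IccExtend hab ((Icc a b).domRestrict Y₀))
    hX₀.domRestrict.Icc_extend' hY₀.domRestrict.Icc_extend'
    (fun v => hXN _ (projIcc c e hce v).2) (fun u => hYN _ (projIcc a b hab u).2)
  have hZN : ∀ q, ‖Z q‖ ≤ N + 1 := fun q => (hZb q).trans (by linarith)
  have hcl : ∀ q, clampBox (N + 1) (Z q) = Z q := fun q => clampBox_of_norm_le (hZN q)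
  simp only [hcl] at hZ1 hZ2
  refine ⟨Z, hZc, hZN, fun v hv => ?_, fun u hu => ?_, fun u hu v hv => ?_, fun u hu v hv => ?_⟩
  · rw [hZ1 u₁ v (by simpa using hε0)]
    rw [IccExtend_of_mem _ _ hv]; simp
  · rw [hZ2 u v₁ (by simpa using hε0)]
    rw [IccExtend_of_mem _ _ hu]; simp
  · have hc : Continuous fun s => F (Z (s, v)) := hF.continuous.comp (hZc.comp (by fun_prop))
    refine ((hc.integral_hasStrictDerivAt u₁ u).hasDerivAt.const_add
      (IccExtend hce ((Icc c e).domRestrict X₀) v)).congr_of_eventuallyEq ?_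
    filter_upwards [Ioo_mem_nhds hu.1 hu.2] with t ht
    exact hZ1 t v (abs_le.2 ⟨by linarith [ht.1], by linarith [ht.2]⟩)
  · have hc : Continuous fun s => G (Z (u, s)) := hG.continuous.comp (hZc.comp (by fun_prop))
    refine ((hc.integral_hasStrictDerivAt v₁ v).hasDerivAt.const_add
      (IccExtend hab ((Icc a b).domRestrict Y₀) u)).congr_of_eventuallyEq ?_
    filter_upwards [Ioo_mem_nhds hv.1 hv.2] with t ht
    exact hZ2 u t (abs_le.2 ⟨by linarith [ht.1], by linarith [ht.2]⟩)

/-- The `u`-component of the regularized system, for the state `((a, k, θ), (l, ζ, w))` with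
`a = rλ`, `k = log κ`, `l = log (-rν)`, `w = log r`. -/
noncomputable def vfX (z : Vec3 × Vec3) : Vec3 :=
  (-exp (z.2.1 + z.1.2.1 - z.2.2.2), -(z.2.2.1 ^ 2 * exp (-z.2.1)),
    -(z.2.2.1 * z.1.1 * exp (-(2 * z.2.2.2))))

/-- The `v`-component of the regularized system. -/
noncomputable def vfY (z : Vec3 × Vec3) : Vec3 :=
  (exp (z.1.2.1 - z.2.2.2), z.1.2.2 * exp (z.2.1 - 2 * z.2.2.2),
    z.1.1 * exp (-(2 * z.2.2.2)))

theorem contDiff_vfX : ContDiff ℝ 1 vfX := by unfold vfX; fun_prop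

theorem contDiff_vfY : ContDiff ℝ 1 vfY := by unfold vfY; fun_prop

/-! ### The regularized system: regularity and constraints -/

/-- A continuous solution of the regularized first-order system on the open rectangle
`(α, β) × (c, e)`, with `C¹` data on the lines `u = u₁` and `v = v₁` that satisfy the constraints
`∂ᵤ r = ν` on `v = v₁` and `∂ᵥ m = θ² / (2κ)` on `u = u₁`. -/
structure RegSys (α β c e u₁ v₁ : ℝ) (a k θ l ζ w : ℝ → ℝ → ℝ) (da dk dθ dl dζ : ℝ → ℝ) :
    Prop where
  hu₁ : u₁ ∈ Ioo α β
  hv₁ : v₁ ∈ Ioo c e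
  ca : ContinuousOn (uncurry a) (ORect α β c e)
  ck : ContinuousOn (uncurry k) (ORect α β c e)
  cθ : ContinuousOn (uncurry θ) (ORect α β c e)
  cl : ContinuousOn (uncurry l) (ORect α β c e)
  cζ : ContinuousOn (uncurry ζ) (ORect α β c e)
  cw : ContinuousOn (uncurry w) (ORect α β c e)
  ha : ∀ u ∈ Ioo α β, ∀ v ∈ Ioo c e,
    HasDerivAt (fun s => a s v) (-exp (l u v + k u v - w u v)) u
  hk : ∀ u ∈ Ioo α β, ∀ v ∈ Ioo c e,
    HasDerivAt (fun s => k s v) (-(ζ u v ^ 2 * exp (-l u v))) u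
  hθ : ∀ u ∈ Ioo α β, ∀ v ∈ Ioo c e,
    HasDerivAt (fun s => θ s v) (-(ζ u v * a u v * exp (-(2 * w u v)))) u
  hl : ∀ u ∈ Ioo α β, ∀ v ∈ Ioo c e,
    HasDerivAt (fun s => l u s) (exp (k u v - w u v)) v
  hζ : ∀ u ∈ Ioo α β, ∀ v ∈ Ioo c e,
    HasDerivAt (fun s => ζ u s) (θ u v * exp (l u v - 2 * w u v)) v
  hw : ∀ u ∈ Ioo α β, ∀ v ∈ Ioo c e,
    HasDerivAt (fun s => w u s) (a u v * exp (-(2 * w u v))) v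
  hda : ∀ v ∈ Ioo c e, HasDerivAt (fun s => a u₁ s) (da v) v
  hdk : ∀ v ∈ Ioo c e, HasDerivAt (fun s => k u₁ s) (dk v) v
  hdθ : ∀ v ∈ Ioo c e, HasDerivAt (fun s => θ u₁ s) (dθ v) v
  hdl : ∀ u ∈ Ioo α β, HasDerivAt (fun s => l s v₁) (dl u) u
  hdζ : ∀ u ∈ Ioo α β, HasDerivAt (fun s => ζ s v₁) (dζ u) u
  hdw : ∀ u ∈ Ioo α β, HasDerivAt (fun s => w s v₁) (-exp (l u v₁ - 2 * w u v₁)) u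
  cda : ContinuousOn da (Ioo c e)
  cdk : ContinuousOn dk (Ioo c e)
  cdθ : ContinuousOn dθ (Ioo c e)
  cdl : ContinuousOn dl (Ioo α β)
  cdζ : ContinuousOn dζ (Ioo α β)
  constr : ∀ v ∈ Ioo c e,
    a u₁ v * dk v - da v + a u₁ v * exp (k u₁ v - w u₁ v) - θ u₁ v ^ 2 = 0

section Regularity
variable {α β c e u₁ v₁ : ℝ} {a k θ l ζ w : ℝ → ℝ → ℝ} {da dk dθ dl dζ : ℝ → ℝ}

theorem continuousOn_uncurry {f : ℝ → ℝ → ℝ} {S : Set (ℝ × ℝ)}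
    (h : ContinuousOn (uncurry f) S) : ContinuousOn (fun q : ℝ × ℝ => f q.1 q.2) S := h

/-- The constraint `∂ᵤ r = ν` propagates. -/
theorem RegSys.w_u (S : RegSys α β c e u₁ v₁ a k θ l ζ w da dk dθ dl dζ) :
    ∀ u ∈ Ioo α β, ∀ v ∈ Ioo c e,
      HasDerivAt (fun s => w s v) (-exp (l u v - 2 * w u v)) u := by
  have ca := continuousOn_uncurry S.ca
  have ck := continuousOn_uncurry S.ck
  have cl := continuousOn_uncurry S.cl
  have cw := continuousOn_uncurry S.cw
  -- `ρ = r² / 2` satisfies the linear equation `∂ᵥ ρ = a`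
  obtain ⟨ρu, h1, -, h3, h4⟩ := transverse (a := c) (b := e) (c := α) (e := β) (u₁ := v₁)
    (f := fun v u => exp (2 * w u v) / 2) (g := fun v u => a u v)
    (gv := fun v u => -exp (l u v + k u v - w u v)) (d := fun u => -exp (l u v₁)) S.hv₁
    (fun v hv u hu => by
      refine ((((S.hw u hu v hv).const_mul 2).exp).div_const 2).congr_deriv ?_
      rw [exp_neg]; field_simp)
    (continuousOn_swap S.ca)
    (fun v hv u hu => S.ha u hu v hv)
    (continuousOn_swap (f := fun u v => -exp (l u v + k u v - w u v))
      (by simp only [uncurry_def]; fun_prop))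
    (fun u hu => by
      refine ((((S.hdw u hu).const_mul 2).exp).div_const 2).congr_deriv ?_
      rw [exp_sub]; field_simp)
    (by
      have : ContinuousOn (fun u => l u v₁) (Ioo α β) :=
        S.cl.comp (f := fun s => (s, v₁)) (by fun_prop) fun s hs => ⟨hs, S.hv₁⟩
      fun_prop)
  intro u hu v hv
  have key : ρu v u = -exp (l u v) := by
    refine eq_of_hasDerivAt_eq S.hv₁ (f := fun v => ρu v u) (g := fun v => -exp (l u v))
      (d := fun v => -exp (l u v + k u v - w u v)) (fun v hv => h3 v hv u hu)
      (fun v hv => ?_) (h4 u) hv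
    refine (S.hl u hu v hv).exp.fun_neg.congr_deriv ?_
    rw [exp_sub, exp_sub, exp_add]; field_simp
  have h5 := h1 v hv u hu
  rw [key] at h5
  have hlog := ((h5.const_mul 2).log (by positivity)).div_const 2
  have h6 : (fun s => log (2 * (exp (2 * w s v) / 2)) / 2) = fun s => w s v := by
    ext s
    rw [mul_div_cancel₀ _ (two_ne_zero), log_exp]; ring
  rw [h6] at hlog
  refine hlog.congr_deriv ?_
  rw [exp_sub]; field_simp

/-- All six unknowns of the regularized system are continuously differentiable. -/
theorem RegSys.partials (S : RegSys α β c e u₁ v₁ a k θ l ζ w da dk dθ dl dζ) :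
    ∃ av kv θv lu ζu : ℝ → ℝ → ℝ,
      (∀ u ∈ Ioo α β, ∀ v ∈ Ioo c e, HasDerivAt (fun s => a u s) (av u v) v) ∧
      (∀ u ∈ Ioo α β, ∀ v ∈ Ioo c e, HasDerivAt (fun s => k u s) (kv u v) v) ∧
      (∀ u ∈ Ioo α β, ∀ v ∈ Ioo c e, HasDerivAt (fun s => θ u s) (θv u v) v) ∧
      (∀ u ∈ Ioo α β, ∀ v ∈ Ioo c e, HasDerivAt (fun s => l s v) (lu u v) u) ∧
      (∀ u ∈ Ioo α β, ∀ v ∈ Ioo c e, HasDerivAt (fun s => ζ s v) (ζu u v) u) ∧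
      ContinuousOn (uncurry av) (ORect α β c e) ∧
      ContinuousOn (uncurry kv) (ORect α β c e) ∧
      ContinuousOn (uncurry θv) (ORect α β c e) ∧
      ContinuousOn (uncurry lu) (ORect α β c e) ∧
      ContinuousOn (uncurry ζu) (ORect α β c e) ∧
      (∀ u ∈ Ioo α β, ∀ v ∈ Ioo c e,
        a u v * kv u v - av u v + a u v * exp (k u v - w u v) - θ u v ^ 2 = 0) := by
  have ca := continuousOn_uncurry S.ca
  have ck := continuousOn_uncurry S.ck
  have cθ := continuousOn_uncurry S.cθ
  have cl := continuousOn_uncurry S.cl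
  have cζ := continuousOn_uncurry S.cζ
  have cw := continuousOn_uncurry S.cw
  obtain ⟨kv, hkv, ckv, hkvu, kv0⟩ := transverse S.hu₁ S.hk
    (by simp only [uncurry_def]; fun_prop)
    (gv := fun u v => -((2 * ζ u v * (θ u v * exp (l u v - 2 * w u v))) * exp (-l u v)
      - ζ u v ^ 2 * (exp (-l u v) * exp (k u v - w u v))))
    (fun u hu v hv => by
      refine (((S.hζ u hu v hv).fun_pow 2).fun_mul (S.hl u hu v hv).fun_neg.exp).fun_neg.congr_deriv
        ?_
      push_cast; ring)
    (by simp only [uncurry_def]; fun_prop) S.hdk S.cdk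
  have ckv' := continuousOn_uncurry ckv
  obtain ⟨av, hav, cav, havu, av0⟩ := transverse S.hu₁ S.ha
    (by simp only [uncurry_def]; fun_prop)
    (gv := fun u v => -(exp (l u v + k u v - w u v) *
      (exp (k u v - w u v) + kv u v - a u v * exp (-(2 * w u v)))))
    (fun u hu v hv =>
      (((S.hl u hu v hv).fun_add (hkv u hu v hv)).fun_sub (S.hw u hu v hv)).exp.fun_neg)
    (by simp only [uncurry_def]; fun_prop) S.hda S.cda
  have cav' := continuousOn_uncurry cav
  obtain ⟨θv, hθv, cθv, hθvu, θv0⟩ := transverse S.hu₁ S.hθ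
    (by simp only [uncurry_def]; fun_prop)
    (gv := fun u v => -(((θ u v * exp (l u v - 2 * w u v)) * a u v + ζ u v * av u v)
        * exp (-(2 * w u v)) + (ζ u v * a u v) * (exp (-(2 * w u v)) *
        (-(2 * (a u v * exp (-(2 * w u v))))))))
    (fun u hu v hv =>
      (((S.hζ u hu v hv).fun_mul (hav u hu v hv)).fun_mul
        ((S.hw u hu v hv).const_mul 2).fun_neg.exp).fun_neg)
    (by simp only [uncurry_def]; fun_prop) S.hdθ S.cdθ
  have hwu := S.w_u
  obtain ⟨lu, hlu, clu, -, -⟩ := transverse (f := fun v u => l u v)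
    (g := fun v u => exp (k u v - w u v)) (a := c) (b := e) (c := α) (e := β) S.hv₁
    (fun v hv u hu => S.hl u hu v hv)
    (continuousOn_swap (f := fun u v => exp (k u v - w u v))
      (by simp only [uncurry_def]; fun_prop))
    (gv := fun v u => exp (k u v - w u v) *
      (-(ζ u v ^ 2 * exp (-l u v)) - -exp (l u v - 2 * w u v)))
    (fun v hv u hu => ((S.hk u hu v hv).fun_sub (hwu u hu v hv)).exp)
    (continuousOn_swap (f := fun u v => exp (k u v - w u v) *
      (-(ζ u v ^ 2 * exp (-l u v)) - -exp (l u v - 2 * w u v)))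
      (by simp only [uncurry_def]; fun_prop)) S.hdl S.cdl
  replace clu := continuousOn_swap clu
  replace hlu : ∀ u ∈ Ioo α β, ∀ v ∈ Ioo c e, HasDerivAt (fun s => l s v) (lu v u) u :=
    fun u hu v hv => hlu v hv u hu
  obtain ⟨lu', rfl⟩ : ∃ lu' : ℝ → ℝ → ℝ, lu = fun v u => lu' u v := ⟨fun u v => lu v u, rfl⟩
  have clu' : ContinuousOn (fun q : ℝ × ℝ => lu' q.1 q.2) (ORect α β c e) := clu
  obtain ⟨ζu, hζu, cζu, -, -⟩ := transverse (f := fun v u => ζ u v)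
    (g := fun v u => θ u v * exp (l u v - 2 * w u v)) (a := c) (b := e) (c := α) (e := β) S.hv₁
    (fun v hv u hu => S.hζ u hu v hv)
    (continuousOn_swap (f := fun u v => θ u v * exp (l u v - 2 * w u v))
      (by simp only [uncurry_def]; fun_prop))
    (gv := fun v u => -(ζ u v * a u v * exp (-(2 * w u v))) * exp (l u v - 2 * w u v)
      + θ u v * (exp (l u v - 2 * w u v) * (lu' u v - 2 * -exp (l u v - 2 * w u v))))
    (fun v hv u hu => (S.hθ u hu v hv).fun_mul
      ((hlu u hu v hv).fun_sub ((hwu u hu v hv).const_mul 2)).exp)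
    (continuousOn_swap (f := fun u v =>
      -(ζ u v * a u v * exp (-(2 * w u v))) * exp (l u v - 2 * w u v)
      + θ u v * (exp (l u v - 2 * w u v) * (lu' u v - 2 * -exp (l u v - 2 * w u v))))
      (by simp only [uncurry_def]; fun_prop)) S.hdζ S.cdζ
  refine ⟨av, kv, θv, lu', fun u v => ζu v u, hav, hkv, hθv,
    hlu, fun u hu v hv => hζu v hv u hu, cav, ckv, cθv,
    clu, continuousOn_swap cζu, fun u hu v hv => ?_⟩
  -- the constraint is independent of `u`
  refine eq_of_hasDerivAt_eq S.hu₁ (d := fun _ => 0)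
    (f := fun u => a u v * kv u v - av u v + a u v * exp (k u v - w u v) - θ u v ^ 2)
    (g := fun _ => 0) (fun u hu => ?_) (fun u hu => hasDerivAt_const u 0) ?_ hu
  · refine (((((S.ha u hu v hv).fun_mul (hkvu u hu v hv)).fun_sub (havu u hu v hv)).fun_add
      ((S.ha u hu v hv).fun_mul ((S.hk u hu v hv).fun_sub (hwu u hu v hv)).exp)).fun_sub
      ((S.hθ u hu v hv).fun_pow 2)).congr_deriv ?_
    simp only [exp_sub, exp_add, exp_neg, two_mul]
    field_simp
    push_cast
    ring
  · simp only [kv0, av0]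
    exact S.constr v hv

end Regularity

/-! ### From the regularized system back to the field equations -/

theorem pdu_eq {W : Set (ℝ × ℝ)} (hW : IsOpen W) {f g : ℝ × ℝ → ℝ} (hfg : EqOn f g W)
    {q : ℝ × ℝ} (hq : q ∈ W) (hg : DifferentiableAt ℝ g q) {d : ℝ}
    (hd : HasDerivAt (fun s => g (s, q.2)) d q.1) : pdu W f q = d := by
  rw [pdu, fderivWithin_congr hfg (hfg hq), fderivWithin_of_isOpen hW hq]
  have h1 : HasDerivAt (fun s : ℝ => (s, q.2)) ((1 : ℝ), (0 : ℝ)) q.1 :=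
    (hasDerivAt_id q.1).prodMk (hasDerivAt_const q.1 q.2)
  exact (HasFDerivAt.comp_hasDerivAt (f := fun s : ℝ => (s, q.2)) q.1
    hg.hasFDerivAt h1).unique hd

theorem pdv_eq {W : Set (ℝ × ℝ)} (hW : IsOpen W) {f g : ℝ × ℝ → ℝ} (hfg : EqOn f g W)
    {q : ℝ × ℝ} (hq : q ∈ W) (hg : DifferentiableAt ℝ g q) {d : ℝ}
    (hd : HasDerivAt (fun s => g (q.1, s)) d q.2) : pdv W f q = d := by
  rw [pdv, fderivWithin_congr hfg (hfg hq), fderivWithin_of_isOpen hW hq]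
  have h1 : HasDerivAt (fun s : ℝ => (q.1, s)) ((0 : ℝ), (1 : ℝ)) q.2 :=
    (hasDerivAt_const q.2 q.1).prodMk (hasDerivAt_id q.2)
  exact (HasFDerivAt.comp_hasDerivAt (f := fun s : ℝ => (q.1, s)) q.2
    hg.hasFDerivAt h1).unique hd

section Regularity
variable {α β c e u₁ v₁ : ℝ} {a k θ l ζ w : ℝ → ℝ → ℝ} {da dk dθ dl dζ : ℝ → ℝ}

/-- The scalar field is recovered from `ζ`, `θ` and its values on `v = v₁`. -/
theorem RegSys.exists_phi (S : RegSys α β c e u₁ v₁ a k θ l ζ w da dk dθ dl dζ) {φ₀ : ℝ → ℝ}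
    (hφ₀ : ∀ u ∈ Ioo α β, HasDerivAt φ₀ (ζ u v₁ * exp (-w u v₁)) u) :
    ∃ φ : ℝ → ℝ → ℝ, (∀ u, φ u v₁ = φ₀ u) ∧
      (∀ u ∈ Ioo α β, ∀ v ∈ Ioo c e, HasDerivAt (fun s => φ u s) (θ u v * exp (-w u v)) v) ∧
      (∀ u ∈ Ioo α β, ∀ v ∈ Ioo c e, HasDerivAt (fun s => φ s v) (ζ u v * exp (-w u v)) u) := by
  have ca := continuousOn_uncurry S.ca
  have cθ := continuousOn_uncurry S.cθ
  have cl := continuousOn_uncurry S.cl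
  have cζ := continuousOn_uncurry S.cζ
  have cw := continuousOn_uncurry S.cw
  have hwu := S.w_u
  have cg : ContinuousOn (uncurry fun v u => θ u v * exp (-w u v)) (ORect c e α β) :=
    continuousOn_swap (f := fun u v => θ u v * exp (-w u v))
      (by simp only [uncurry_def]; fun_prop)
  set φ : ℝ → ℝ → ℝ := fun u v => φ₀ u + ∫ s in v₁..v, θ u s * exp (-w u s) with hφ
  have hφ0 : ∀ u, φ u v₁ = φ₀ u := fun u => by simp [hφ]
  have hφv : ∀ u ∈ Ioo α β, ∀ v ∈ Ioo c e,
      HasDerivAt (fun s => φ u s) (θ u v * exp (-w u v)) v := by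
    intro u hu v hv
    have hc : ContinuousOn (fun s => θ u s * exp (-w u s)) (Ioo c e) :=
      cg.comp (f := fun s => (s, u)) (by fun_prop) fun s hs => ⟨hs, hu⟩
    have := intervalIntegral.integral_hasDerivAt_right
      (continuousOn_slice S.hv₁ hv hu cg).intervalIntegrable
      (hc.stronglyMeasurableAtFilter isOpen_Ioo v hv)
      (hc.continuousAt (Ioo_mem_nhds hv.1 hv.2))
    exact this.const_add _
  refine ⟨φ, hφ0, hφv, fun u hu v hv => ?_⟩
  obtain ⟨φu, h1, -, h3, h4⟩ := transverse (a := c) (b := e) (c := α) (e := β) (u₁ := v₁)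
    (f := fun v u => φ u v) S.hv₁ (fun v hv u hu => hφv u hu v hv) cg
    (gv := fun v u => -(ζ u v * a u v * exp (-(2 * w u v))) * exp (-w u v)
      + θ u v * (exp (-w u v) * (- -exp (l u v - 2 * w u v))))
    (fun v hv u hu => (S.hθ u hu v hv).fun_mul (hwu u hu v hv).fun_neg.exp)
    (continuousOn_swap (f := fun u v => -(ζ u v * a u v * exp (-(2 * w u v))) * exp (-w u v)
      + θ u v * (exp (-w u v) * (- -exp (l u v - 2 * w u v))))
      (by simp only [uncurry_def]; fun_prop))
    (d := fun u => ζ u v₁ * exp (-w u v₁))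
    (fun u hu => by simpa only [hφ0] using hφ₀ u hu)
    (by
      have h1 : ContinuousOn (fun u => ζ u v₁) (Ioo α β) :=
        S.cζ.comp (f := fun s => (s, v₁)) (by fun_prop) fun s hs => ⟨hs, S.hv₁⟩
      have h2 : ContinuousOn (fun u => w u v₁) (Ioo α β) :=
        S.cw.comp (f := fun s => (s, v₁)) (by fun_prop) fun s hs => ⟨hs, S.hv₁⟩
      fun_prop)
  have key : φu v u = ζ u v * exp (-w u v) := by
    refine eq_of_hasDerivAt_eq S.hv₁ (f := fun v => φu v u) (g := fun v => ζ u v * exp (-w u v))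
      (fun v hv => h3 v hv u hu) (fun v hv => ?_) (h4 u) hv
    refine ((S.hζ u hu v hv).fun_mul (S.hw u hu v hv).fun_neg.exp).congr_deriv ?_
    simp only [exp_sub, exp_neg, two_mul, exp_add]
    field_simp
    ring
  rw [← key]
  exact h1 v hv u hu

/-- A regular solution of the first-order system gives back a solution of the Einstein-scalar field
system, on every open set on which `λ > 0`. -/
theorem RegSys.exists_sol (S : RegSys α β c e u₁ v₁ a k θ l ζ w da dk dθ dl dζ) {φ₀ : ℝ → ℝ}
    (hφ₀ : ∀ u ∈ Ioo α β, HasDerivAt φ₀ (ζ u v₁ * exp (-w u v₁)) u) :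
    ∃ φ : ℝ → ℝ → ℝ, (∀ u, φ u v₁ = φ₀ u) ∧
      (∀ u ∈ Ioo α β, ∀ v ∈ Ioo c e, HasDerivAt (fun s => φ u s) (θ u v * exp (-w u v)) v) ∧
      ∀ (R : ℝ) (W : Set (ℝ × ℝ)), IsOpen W → W ⊆ ORect α β c e → W ⊆ Quad R →
        (∀ q ∈ W, 0 < a q.1 q.2) →
        EFSol R W (fun q => exp (w q.1 q.2))
          (fun q => (exp (w q.1 q.2) - a q.1 q.2 * exp (-k q.1 q.2)) / 2)
          (fun q => φ q.1 q.2) := by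
  obtain ⟨φ, hφ0, hφv, hφu⟩ := S.exists_phi hφ₀
  refine ⟨φ, hφ0, hφv, fun R W hW hWr hWQ hpos => ?_⟩
  obtain ⟨av, kv, θv, lu, ζu, hav, hkv, hθv, hlu, hζu, cav, ckv, cθv, clu, cζu, hcon⟩ := S.partials
  have hwu := S.w_u
  have ca := continuousOn_uncurry S.ca
  have ck := continuousOn_uncurry S.ck
  have cθ := continuousOn_uncurry S.cθ
  have cl := continuousOn_uncurry S.cl
  have cζ := continuousOn_uncurry S.cζ
  have cw := continuousOn_uncurry S.cw
  have c1 : ∀ {f fu fv : ℝ → ℝ → ℝ},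
      (∀ u ∈ Ioo α β, ∀ v ∈ Ioo c e, HasDerivAt (fun s => f s v) (fu u v) u) →
      (∀ u ∈ Ioo α β, ∀ v ∈ Ioo c e, HasDerivAt (fun s => f u s) (fv u v) v) →
      ContinuousOn (uncurry fu) (ORect α β c e) → ContinuousOn (uncurry fv) (ORect α β c e) →
      ContDiffOn ℝ 1 (fun q : ℝ × ℝ => f q.1 q.2) (ORect α β c e) := by
    intro f fu fv h1 h2 h3 h4
    have := contDiffOn_of_partials (n := 0) h1 h2 (by simpa using h3) (by simpa using h4)
    rw [Nat.cast_zero, zero_add] at this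
    exact this
  have c2 : ∀ {f fu fv : ℝ → ℝ → ℝ},
      (∀ u ∈ Ioo α β, ∀ v ∈ Ioo c e, HasDerivAt (fun s => f s v) (fu u v) u) →
      (∀ u ∈ Ioo α β, ∀ v ∈ Ioo c e, HasDerivAt (fun s => f u s) (fv u v) v) →
      ContDiffOn ℝ 1 (uncurry fu) (ORect α β c e) → ContDiffOn ℝ 1 (uncurry fv) (ORect α β c e) →
      ContDiffOn ℝ 2 (fun q : ℝ × ℝ => f q.1 q.2) (ORect α β c e) := by
    intro f fu fv h1 h2 h3 h4
    have := contDiffOn_of_partials (n := 1) h1 h2 (by simpa using h3) (by simpa using h4)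
    have e : ((1 : ℕ) : WithTop ℕ∞) + 1 = 2 := by norm_num
    rw [e] at this
    exact this
  have da1 := c1 S.ha hav (by simp only [uncurry_def]; fun_prop) cav
  have dk1 := c1 S.hk hkv (by simp only [uncurry_def]; fun_prop) ckv
  have dθ1 := c1 S.hθ hθv (by simp only [uncurry_def]; fun_prop) cθv
  have dl1 := c1 hlu S.hl clu (by simp only [uncurry_def]; fun_prop)
  have dζ1 := c1 hζu S.hζ cζu (by simp only [uncurry_def]; fun_prop)
  have dw1 := c1 hwu S.hw (by simp only [uncurry_def]; fun_prop)
    (by simp only [uncurry_def]; fun_prop)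
  -- first derivatives of `r` and `m`
  have hru : ∀ u ∈ Ioo α β, ∀ v ∈ Ioo c e,
      HasDerivAt (fun s => exp (w s v)) (-exp (l u v - w u v)) u := fun u hu v hv => by
    refine (hwu u hu v hv).exp.congr_deriv ?_
    simp only [exp_sub, two_mul, exp_add]; field_simp
  have hrv : ∀ u ∈ Ioo α β, ∀ v ∈ Ioo c e,
      HasDerivAt (fun s => exp (w u s)) (a u v * exp (-w u v)) v := fun u hu v hv => by
    refine (S.hw u hu v hv).exp.congr_deriv ?_
    simp only [exp_neg, two_mul, exp_add]; field_simp
  have hmu : ∀ u ∈ Ioo α β, ∀ v ∈ Ioo c e,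
      HasDerivAt (fun s => (exp (w s v) - a s v * exp (-k s v)) / 2)
        (-(a u v * ζ u v ^ 2 * exp (-l u v - k u v) / 2)) u := fun u hu v hv => by
    refine (((hru u hu v hv).fun_sub ((S.ha u hu v hv).fun_mul
      (S.hk u hu v hv).fun_neg.exp)).div_const 2).congr_deriv ?_
    simp only [exp_sub, exp_add, exp_neg]
    field_simp
    ring
  have hmv : ∀ u ∈ Ioo α β, ∀ v ∈ Ioo c e,
      HasDerivAt (fun s => (exp (w u s) - a u s * exp (-k u s)) / 2)
        (θ u v ^ 2 * exp (-k u v) / 2) v := fun u hu v hv => by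
    refine (((hrv u hu v hv).fun_sub ((hav u hu v hv).fun_mul
      (hkv u hu v hv).fun_neg.exp)).div_const 2).congr_deriv ?_
    have h := hcon u hu v hv
    have h' : θ u v ^ 2 = a u v * kv u v - av u v + a u v * exp (k u v - w u v) := by linarith
    rw [h']
    simp only [exp_sub, exp_neg]
    field_simp
    ring
  have C2r := c2 hru hrv (by simp only [uncurry_def]; fun_prop) (by simp only [uncurry_def]; fun_prop)
  have C2m := c2 hmu hmv (by simp only [uncurry_def]; fun_prop) (by simp only [uncurry_def]; fun_prop)
  have C2φ := c2 hφu hφv (by simp only [uncurry_def]; fun_prop) (by simp only [uncurry_def]; fun_prop)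
  have dAt : ∀ {f : ℝ × ℝ → ℝ}, ContDiffOn ℝ 1 f (ORect α β c e) → ∀ q ∈ W,
      DifferentiableAt ℝ f q := fun hf q hq =>
    (hf.contDiffAt ((isOpen_orect _ _ _ _).mem_nhds (hWr hq))).differentiableAt one_ne_zero
  have one_two : (1 : WithTop ℕ∞) ≤ 2 := by norm_num
  have Pru : ∀ q ∈ W, pdu W (fun q => exp (w q.1 q.2)) q = -exp (l q.1 q.2 - w q.1 q.2) :=
    fun q hq => pdu_eq hW (fun _ _ => rfl) hq (dAt (C2r.of_le one_two) q hq)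
      (hru q.1 (hWr hq).1 q.2 (hWr hq).2)
  have Prv : ∀ q ∈ W, pdv W (fun q => exp (w q.1 q.2)) q = a q.1 q.2 * exp (-w q.1 q.2) :=
    fun q hq => pdv_eq hW (fun _ _ => rfl) hq (dAt (C2r.of_le one_two) q hq)
      (hrv q.1 (hWr hq).1 q.2 (hWr hq).2)
  have Pmu : ∀ q ∈ W, pdu W (fun q => (exp (w q.1 q.2) - a q.1 q.2 * exp (-k q.1 q.2)) / 2) q
      = -(a q.1 q.2 * ζ q.1 q.2 ^ 2 * exp (-l q.1 q.2 - k q.1 q.2) / 2) :=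
    fun q hq => pdu_eq hW (fun _ _ => rfl) hq (dAt (C2m.of_le one_two) q hq)
      (hmu q.1 (hWr hq).1 q.2 (hWr hq).2)
  have Pmv : ∀ q ∈ W, pdv W (fun q => (exp (w q.1 q.2) - a q.1 q.2 * exp (-k q.1 q.2)) / 2) q
      = θ q.1 q.2 ^ 2 * exp (-k q.1 q.2) / 2 :=
    fun q hq => pdv_eq hW (fun _ _ => rfl) hq (dAt (C2m.of_le one_two) q hq)
      (hmv q.1 (hWr hq).1 q.2 (hWr hq).2)
  have Pφu : ∀ q ∈ W, pdu W (fun q => φ q.1 q.2) q = ζ q.1 q.2 * exp (-w q.1 q.2) :=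
    fun q hq => pdu_eq hW (fun _ _ => rfl) hq (dAt (C2φ.of_le one_two) q hq)
      (hφu q.1 (hWr hq).1 q.2 (hWr hq).2)
  have Pφv : ∀ q ∈ W, pdv W (fun q => φ q.1 q.2) q = θ q.1 q.2 * exp (-w q.1 q.2) :=
    fun q hq => pdv_eq hW (fun _ _ => rfl) hq (dAt (C2φ.of_le one_two) q hq)
      (hφv q.1 (hWr hq).1 q.2 (hWr hq).2)
  have mu_id : ∀ q : ℝ × ℝ, 1 - 2 * ((exp (w q.1 q.2) - a q.1 q.2 * exp (-k q.1 q.2)) / 2)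
      / exp (w q.1 q.2) = a q.1 q.2 * exp (-k q.1 q.2) / exp (w q.1 q.2) := fun q => by
    field_simp; ring
  refine ⟨hWQ, ⟨W, hW, (inter_eq_left.2 hWQ).symm⟩, C2r.mono hWr, C2m.mono hWr, C2φ.mono hWr,
    fun q _ => exp_pos _, fun q hq => ?_, fun q hq => ?_, fun q hq => ?_, fun q hq => ?_,
    fun q hq => ?_, fun q hq => ?_, fun q hq => ?_⟩
  · have := mul_pos (hpos q hq) (exp_pos (-k q.1 q.2))
    intro h
    linarith
  · have ha0 := (hpos q hq).ne'
    rw [pdu_eq hW (fun x hx => Prv x hx) hq (dAt (by fun_prop) q hq)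
      ((S.ha q.1 (hWr hq).1 q.2 (hWr hq).2).fun_mul
        (hwu q.1 (hWr hq).1 q.2 (hWr hq).2).fun_neg.exp), Prv q hq, Pru q hq, mu_id]
    simp only [exp_sub, exp_neg, two_mul, exp_add]
    field_simp
    ring
  · have ha0 := (hpos q hq).ne'
    rw [pdv_eq hW (fun x hx => Pru x hx) hq (dAt (by fun_prop) q hq)
      ((S.hl q.1 (hWr hq).1 q.2 (hWr hq).2).fun_sub
        (S.hw q.1 (hWr hq).1 q.2 (hWr hq).2)).exp.fun_neg, Prv q hq, Pru q hq, mu_id]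
    simp only [exp_sub, exp_neg, two_mul, exp_add]
    field_simp
    ring
  · rw [Pru q hq, Pmu q hq, Pφu q hq, mu_id]
    simp only [exp_sub, exp_neg]
    field_simp
  · rw [Prv q hq, Pmv q hq, Pφv q hq, mu_id]
    simp only [exp_neg]
    field_simp
  · have e1 : EqOn (fun q : ℝ × ℝ => exp (w q.1 q.2) * pdv W (fun q => φ q.1 q.2) q)
        (fun q => θ q.1 q.2) W := fun x hx => by
      simp only [Pφv x hx, exp_neg]; field_simp
    rw [pdu_eq hW e1 hq (dAt dθ1 q hq) (S.hθ q.1 (hWr hq).1 q.2 (hWr hq).2), Prv q hq, Pφu q hq]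
    simp only [exp_neg, two_mul, exp_add]
    field_simp
  · have e1 : EqOn (fun q : ℝ × ℝ => exp (w q.1 q.2) * pdu W (fun q => φ q.1 q.2) q)
        (fun q => ζ q.1 q.2) W := fun x hx => by
      simp only [Pφu x hx, exp_neg]; field_simp
    rw [pdv_eq hW e1 hq (dAt dζ1 q hq) (S.hζ q.1 (hWr hq).1 q.2 (hWr hq).2), Pru q hq, Pφv q hq]
    simp only [exp_neg, exp_sub, two_mul, exp_add]
    field_simp

end Regularity

/-! ### Characteristic derivatives and signs of the geometry -/

theorem uniqueDiffOn_of_relOpen {R : ℝ} {D : Set (ℝ × ℝ)}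
    (hD : ∃ U : Set (ℝ × ℝ), IsOpen U ∧ D = U ∩ Quad R) : UniqueDiffOn ℝ D := by
  obtain ⟨U, hU, rfl⟩ := hD
  rw [inter_comm]
  exact ((uniqueDiffOn_Iic _).prod (uniqueDiffOn_Ici _)).inter hU

/-- On a relatively open subset of `Q_R`, `pdu` is the derivative along lines of constant `v`,
one-sided at the edge `u = -R`. -/
theorem hasDeriv_u {R : ℝ} {D : Set (ℝ × ℝ)} (hD : ∃ U : Set (ℝ × ℝ), IsOpen U ∧ D = U ∩ Quad R)
    {f : ℝ × ℝ → ℝ} (hf : DifferentiableOn ℝ f D) {u v : ℝ} (hq : (u, v) ∈ D) :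
    HasDerivWithinAt (fun s => f (s, v)) (pdu D f (u, v)) (Iic (-R)) u := by
  obtain ⟨U, hU, rfl⟩ := hD
  have h1 : HasDerivWithinAt (fun s : ℝ => (s, v)) ((1 : ℝ), (0 : ℝ))
      {s | (s, v) ∈ U ∩ Quad R} u :=
    ((hasDerivAt_id u).prodMk (hasDerivAt_const u v)).hasDerivWithinAt
  have h2 := HasFDerivWithinAt.comp_hasDerivWithinAt (f := fun s : ℝ => (s, v)) u
    ((hf _ hq).hasFDerivWithinAt) h1 (fun s hs => hs)
  refine h2.mono_of_mem_nhdsWithin ?_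
  have h3 : (fun s : ℝ => (s, v)) ⁻¹' U ∈ 𝓝 u :=
    (hU.preimage (by fun_prop : Continuous fun s : ℝ => (s, v))).mem_nhds hq.1
  filter_upwards [mem_nhdsWithin_of_mem_nhds h3, self_mem_nhdsWithin] with s hs hs'
  exact ⟨hs, hs', hq.2.2⟩

/-- On a relatively open subset of `Q_R`, `pdv` is the derivative along lines of constant `u`,
one-sided at the edge `v = R`. -/
theorem hasDeriv_v {R : ℝ} {D : Set (ℝ × ℝ)} (hD : ∃ U : Set (ℝ × ℝ), IsOpen U ∧ D = U ∩ Quad R)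
    {f : ℝ × ℝ → ℝ} (hf : DifferentiableOn ℝ f D) {u v : ℝ} (hq : (u, v) ∈ D) :
    HasDerivWithinAt (fun s => f (u, s)) (pdv D f (u, v)) (Ici R) v := by
  obtain ⟨U, hU, rfl⟩ := hD
  have h1 : HasDerivWithinAt (fun s : ℝ => (u, s)) ((0 : ℝ), (1 : ℝ))
      {s | (u, s) ∈ U ∩ Quad R} v :=
    ((hasDerivAt_const v u).prodMk (hasDerivAt_id v)).hasDerivWithinAt
  have h2 := HasFDerivWithinAt.comp_hasDerivWithinAt (f := fun s : ℝ => (u, s)) v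
    ((hf _ hq).hasFDerivWithinAt) h1 (fun s hs => hs)
  refine h2.mono_of_mem_nhdsWithin ?_
  have h3 : (fun s : ℝ => (u, s)) ⁻¹' U ∈ 𝓝 v :=
    (hU.preimage (by fun_prop : Continuous fun s : ℝ => (u, s))).mem_nhds hq.1
  filter_upwards [mem_nhdsWithin_of_mem_nhds h3, self_mem_nhdsWithin] with s hs hs'
  exact ⟨hs, hq.2.1, hs'⟩

theorem contDiffOn_pdu {D : Set (ℝ × ℝ)} (hD : UniqueDiffOn ℝ D) {f : ℝ × ℝ → ℝ} {n : WithTop ℕ∞}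
    (hf : ContDiffOn ℝ (n + 1) f D) : ContDiffOn ℝ n (pdu D f) D :=
  (hf.fderivWithin hD le_rfl).clm_apply contDiffOn_const

theorem contDiffOn_pdv {D : Set (ℝ × ℝ)} (hD : UniqueDiffOn ℝ D) {f : ℝ × ℝ → ℝ} {n : WithTop ℕ∞}
    (hf : ContDiffOn ℝ (n + 1) f D) : ContDiffOn ℝ n (pdv D f) D :=
  (hf.fderivWithin hD le_rfl).clm_apply contDiffOn_const

theorem monotoneOn_Icc {a b : ℝ} {f f' : ℝ → ℝ}
    (hf : ∀ x ∈ Icc a b, HasDerivWithinAt f (f' x) (Icc a b) x) (h : ∀ x ∈ Icc a b, 0 ≤ f' x) :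
    MonotoneOn f (Icc a b) :=
  monotoneOn_of_hasDerivWithinAt_nonneg (convex_Icc a b)
    (fun x hx => (hf x hx).continuousWithinAt)
    (fun x hx => (hf x (interior_subset hx)).mono interior_subset)
    fun x hx => h x (interior_subset hx)

theorem antitoneOn_Icc {a b : ℝ} {f f' : ℝ → ℝ}
    (hf : ∀ x ∈ Icc a b, HasDerivWithinAt f (f' x) (Icc a b) x) (h : ∀ x ∈ Icc a b, f' x ≤ 0) :
    AntitoneOn f (Icc a b) :=
  antitoneOn_of_hasDerivWithinAt_nonpos (convex_Icc a b)
    (fun x hx => (hf x hx).continuousWithinAt)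
    (fun x hx => (hf x (interior_subset hx)).mono interior_subset)
    fun x hx => h x (interior_subset hx)

/-- Solutions of a scalar linear equation `f' = f c` do not change sign. -/
theorem pos_of_linear {a b x₁ : ℝ} {f c : ℝ → ℝ}
    (hf : ∀ x ∈ Icc a b, HasDerivWithinAt f (f x * c x) (Icc a b) x)
    (hc : ContinuousOn c (Icc a b)) (hx₁ : x₁ ∈ Icc a b) (h : 0 < f x₁) {x : ℝ}
    (hx : x ∈ Icc a b) : 0 < f x := by
  have hab : a ≤ b := hx.1.trans hx.2
  set C : ℝ → ℝ := IccExtend hab ((Icc a b).domRestrict c)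
  have hC : Continuous C := hc.domRestrict.Icc_extend'
  have hg : ∀ y ∈ Icc a b, HasDerivWithinAt
      (fun y => f y * exp (-∫ s in a..y, C s)) 0 (Icc a b) y := by
    intro y hy
    have h1 := (hC.integral_hasStrictDerivAt a y).hasDerivAt.hasDerivWithinAt (s := Icc a b)
    refine ((hf y hy).mul h1.neg.exp).congr_deriv ?_
    have : C y = c y := by simp only [C]; rw [IccExtend_of_mem _ _ hy]; simp
    rw [this]
    simp only [Pi.neg_apply]
    ring
  have hconst := constant_of_derivWithin_zero
    (fun y hy => (hg y hy).differentiableWithinAt)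
    (fun y hy => (hg y (Ico_subset_Icc_self hy)).derivWithin
      (uniqueDiffOn_Icc (lt_of_le_of_lt hy.1 hy.2) y (Ico_subset_Icc_self hy)))
  have e := (hconst x hx).trans (hconst x₁ hx₁).symm
  have h2 : 0 < f x₁ * exp (-∫ s in a..x₁, C s) := mul_pos h (exp_pos _)
  rw [← e] at h2
  exact pos_of_mul_pos_left h2 (exp_pos _).le

/-- The `X`-part `(rλ, log κ, θ)` of the regularized state of a solution. -/
noncomputable def stX (D : Set (ℝ × ℝ)) (r m φ : ℝ × ℝ → ℝ) (q : ℝ × ℝ) : Vec3 :=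
  (r q * pdv D r q, log (pdv D r q * r q / (r q - 2 * m q)), r q * pdv D φ q)

/-- The `Y`-part `(log (-rν), ζ, log r)` of the regularized state of a solution. -/
noncomputable def stY (D : Set (ℝ × ℝ)) (r φ : ℝ × ℝ → ℝ) (q : ℝ × ℝ) : Vec3 :=
  (log (-(r q * pdu D r q)), r q * pdu D φ q, log (r q))

/-- The full regularized state of a solution. -/
noncomputable def st (D : Set (ℝ × ℝ)) (r m φ : ℝ × ℝ → ℝ) (q : ℝ × ℝ) : Vec3 × Vec3 :=
  (stX D r m φ q, stY D r φ q)

section Development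
variable {R C M m₀ : ℝ} {D : Set (ℝ × ℝ)} {r m φ : ℝ × ℝ → ℝ}

theorem past_rect (hic : CharIC R C M m₀ D r m φ) {u v : ℝ}
    (hq : (u, v) ∈ D) {u' v' : ℝ} (hu : u' ∈ Icc u (-R)) (hv : v' ∈ Icc R v) : (u', v') ∈ D :=
  hic.past _ hq _ ⟨hu.2, hv.1⟩ hu.1 hv.2

/-- No point of `D` is trapped: `r > 0`, `1 - μ > 0`, `λ > 0` and `ν < 0` everywhere. -/
structure Signs (R : ℝ) (D : Set (ℝ × ℝ)) (r m : ℝ × ℝ → ℝ) : Prop where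
  r_pos : ∀ q ∈ D, 0 < r q
  one_mu : ∀ q ∈ D, 0 < r q - 2 * m q
  lam : ∀ q ∈ D, 0 < pdv D r q
  nu : ∀ q ∈ D, pdu D r q < 0

/-- `r - 2m` is positive at the corner and has no zero on the rectangle joining the corner to a point
of `D`, so it is positive there. Then `λ` and `ν` solve linear homogeneous equations with continuous
coefficients along the characteristics and keep the signs they have on the initial rays. -/
theorem signs (h : EFSol R D r m φ) (hic : CharIC R C M m₀ D r m φ) (hRM : 2 * m₀ < R) :
    Signs R D r m := by
  have hU := uniqueDiffOn_of_relOpen h.relOpen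
  have cr := h.hr.continuousOn
  have cm := h.hm.continuousOn
  have e2 : (2 : WithTop ℕ∞) = 1 + 1 := by norm_num
  have cl1 : ContDiffOn ℝ 1 (pdv D r) D := contDiffOn_pdv hU (e2 ▸ h.hr)
  have cn1 : ContDiffOn ℝ 1 (pdu D r) D := contDiffOn_pdu hU (e2 ▸ h.hr)
  have cl := cl1.continuousOn
  have cn := cn1.continuousOn
  have hμ0 : ∀ q ∈ D, 1 - 2 * m q / r q ≠ 0 := fun q hq => by
    have h1 := (h.rpos q hq).ne'
    have h2 := h.mu_ne q hq
    rw [Ne, sub_eq_zero, eq_div_iff h1, one_mul]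
    exact fun h => h2 h.symm
  refine ⟨h.rpos, ?_, ?_, ?_⟩
  · rintro ⟨u, v⟩ hq
    have hQ := h.subset hq
    have hsub : Icc u (-R) ×ˢ Icc R v ⊆ D := fun x hx => past_rect hic hq hx.1 hx.2
    have hc : ContinuousOn (fun q => r q - 2 * m q) (Icc u (-R) ×ˢ Icc R v) := by
      have := cr.mono hsub
      have := cm.mono hsub
      fun_prop
    by_contra hneg
    have hcorner : ((-R, R) : ℝ × ℝ) ∈ Icc u (-R) ×ˢ Icc R v :=
      ⟨⟨hQ.1, le_rfl⟩, ⟨le_rfl, hQ.2⟩⟩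
    have hself : ((u, v) : ℝ × ℝ) ∈ Icc u (-R) ×ˢ Icc R v :=
      ⟨⟨le_rfl, hQ.1⟩, ⟨hQ.2, le_rfl⟩⟩
    obtain ⟨x, hx, hx0⟩ := ((convex_Icc u (-R)).prod (convex_Icc R v)).isPreconnected.intermediate_value
      hself hcorner hc
      (show (0 : ℝ) ∈ Icc _ _ from ⟨not_lt.1 hneg, by
        simp only [hic.r_corner, hic.m_corner]; linarith⟩)
    exact h.mu_ne x (hsub hx) (by simp only at hx0; linarith)
  · rintro ⟨u, v⟩ hq
    have hQ := h.subset hq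
    have hin : ∀ s ∈ Icc u (-R), (s, v) ∈ D := fun s hs => past_rect hic hq hs ⟨hQ.2, le_rfl⟩
    refine pos_of_linear (a := u) (b := -R) (x₁ := -R) (f := fun s => pdv D r (s, v))
      (c := fun s => 2 * pdu D r (s, v) / (1 - 2 * m (s, v) / r (s, v)) * (m (s, v) / r (s, v) ^ 2))
      (fun s hs => ?_) ?_ ⟨hQ.1, le_rfl⟩ ?_ ⟨le_rfl, hQ.1⟩
    · have := hasDeriv_u h.relOpen (cl1.differentiableOn one_ne_zero) (hin s hs)
      rw [show pdu D (pdv D r) (s, v) = _ from h.eq_lam _ (hin s hs), mul_assoc] at this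
      exact this.mono fun x hx => hx.2
    · have hcomp : ∀ {g : ℝ × ℝ → ℝ}, ContinuousOn g D →
          ContinuousOn (fun s => g (s, v)) (Icc u (-R)) := fun hg =>
        hg.comp (f := fun s => (s, v)) (by fun_prop) hin
      have c1 := hcomp cr
      have c2 := hcomp cm
      have c3 := hcomp cn
      have n1 : ∀ s ∈ Icc u (-R), r (s, v) ≠ 0 := fun s hs => (h.rpos _ (hin s hs)).ne'
      have n2 : ∀ s ∈ Icc u (-R), 1 - 2 * m (s, v) / r (s, v) ≠ 0 := fun s hs => hμ0 _ (hin s hs)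
      exact ((continuousOn_const.mul c3).div
        (continuousOn_const.sub ((continuousOn_const.mul c2).div c1 n1)) n2).mul
        (c2.div (c1.pow 2) fun s hs => pow_ne_zero 2 (n1 s hs))
    · rw [hic.lam_one v hQ.2]; exact one_pos
  · rintro ⟨u, v⟩ hq
    have hQ := h.subset hq
    have hin : ∀ s ∈ Icc R v, (u, s) ∈ D := fun s hs => past_rect hic hq ⟨le_rfl, hQ.1⟩ hs
    rw [← neg_pos]
    refine pos_of_linear (a := R) (b := v) (x₁ := R) (f := fun s => -pdu D r (u, s))
      (c := fun s => 2 * pdv D r (u, s) / (1 - 2 * m (u, s) / r (u, s)) * (m (u, s) / r (u, s) ^ 2))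
      (fun s hs => ?_) ?_ ⟨le_rfl, hQ.2⟩ ?_ ⟨hQ.2, le_rfl⟩
    · have := hasDeriv_v h.relOpen (cn1.differentiableOn one_ne_zero) (hin s hs)
      rw [show pdv D (pdu D r) (u, s) = _ from h.eq_nu _ (hin s hs), mul_assoc] at this
      rw [neg_mul]
      exact (this.mono fun x hx => hx.1).fun_neg
    · have hcomp : ∀ {g : ℝ × ℝ → ℝ}, ContinuousOn g D →
          ContinuousOn (fun s => g (u, s)) (Icc R v) := fun hg =>
        hg.comp (f := fun s => (u, s)) (by fun_prop) hin
      have c1 := hcomp cr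
      have c2 := hcomp cm
      have c3 := hcomp cl
      have n1 : ∀ s ∈ Icc R v, r (u, s) ≠ 0 := fun s hs => (h.rpos _ (hin s hs)).ne'
      have n2 : ∀ s ∈ Icc R v, 1 - 2 * m (u, s) / r (u, s) ≠ 0 := fun s hs => hμ0 _ (hin s hs)
      exact ((continuousOn_const.mul c3).div
        (continuousOn_const.sub ((continuousOn_const.mul c2).div c1 n1)) n2).mul
        (c2.div (c1.pow 2) fun s hs => pow_ne_zero 2 (n1 s hs))
    · rw [hic.nu_one u hQ.1]; norm_num

end Development

/-! ### From the field equations to the regularized system -/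

section Development
variable {R C M m₀ : ℝ} {D : Set (ℝ × ℝ)} {r m φ : ℝ × ℝ → ℝ}

/-- `a = rλ`. -/
noncomputable def fa (D : Set (ℝ × ℝ)) (r : ℝ × ℝ → ℝ) (q : ℝ × ℝ) : ℝ := r q * pdv D r q
/-- `k = log κ`, where `κ = λ / (1 - μ)`. -/
noncomputable def fk (D : Set (ℝ × ℝ)) (r m : ℝ × ℝ → ℝ) (q : ℝ × ℝ) : ℝ :=
  log (pdv D r q * r q / (r q - 2 * m q))
/-- `θ = r ∂ᵥφ`. -/
noncomputable def fθ (D : Set (ℝ × ℝ)) (r φ : ℝ × ℝ → ℝ) (q : ℝ × ℝ) : ℝ := r q * pdv D φ q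
/-- `l = log (-rν)`. -/
noncomputable def fl (D : Set (ℝ × ℝ)) (r : ℝ × ℝ → ℝ) (q : ℝ × ℝ) : ℝ := log (-(r q * pdu D r q))
/-- `ζ = r ∂ᵤφ`. -/
noncomputable def fζ (D : Set (ℝ × ℝ)) (r φ : ℝ × ℝ → ℝ) (q : ℝ × ℝ) : ℝ := r q * pdu D φ q
/-- `w = log r`. -/
noncomputable def fw (r : ℝ × ℝ → ℝ) (q : ℝ × ℝ) : ℝ := log (r q)

/-- The regularized form of the field equations satisfied by a solution on `D`. -/
structure RegOld (R : ℝ) (D : Set (ℝ × ℝ)) (r m φ : ℝ × ℝ → ℝ) : Prop where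
  ca : ContDiffOn ℝ 1 (fa D r) D
  ck : ContDiffOn ℝ 1 (fk D r m) D
  cθ : ContDiffOn ℝ 1 (fθ D r φ) D
  cl : ContDiffOn ℝ 1 (fl D r) D
  cζ : ContDiffOn ℝ 1 (fζ D r φ) D
  cw : ContDiffOn ℝ 1 (fw r) D
  el : ∀ q ∈ D, exp (fl D r q) = -(r q * pdu D r q)
  ek : ∀ q ∈ D, exp (fk D r m q) = pdv D r q * r q / (r q - 2 * m q)
  ew : ∀ q ∈ D, exp (fw r q) = r q
  ha : ∀ u v, (u, v) ∈ D → HasDerivWithinAt (fun s => fa D r (s, v))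
    (-exp (fl D r (u, v) + fk D r m (u, v) - fw r (u, v))) (Iic (-R)) u
  hk : ∀ u v, (u, v) ∈ D → HasDerivWithinAt (fun s => fk D r m (s, v))
    (-(fζ D r φ (u, v) ^ 2 * exp (-fl D r (u, v)))) (Iic (-R)) u
  hθ : ∀ u v, (u, v) ∈ D → HasDerivWithinAt (fun s => fθ D r φ (s, v))
    (-(fζ D r φ (u, v) * fa D r (u, v) * exp (-(2 * fw r (u, v))))) (Iic (-R)) u
  hl : ∀ u v, (u, v) ∈ D → HasDerivWithinAt (fun s => fl D r (u, s))
    (exp (fk D r m (u, v) - fw r (u, v))) (Ici R) v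
  hζ : ∀ u v, (u, v) ∈ D → HasDerivWithinAt (fun s => fζ D r φ (u, s))
    (fθ D r φ (u, v) * exp (fl D r (u, v) - 2 * fw r (u, v))) (Ici R) v
  hw : ∀ u v, (u, v) ∈ D → HasDerivWithinAt (fun s => fw r (u, s))
    (fa D r (u, v) * exp (-(2 * fw r (u, v)))) (Ici R) v
  hwu : ∀ u v, (u, v) ∈ D → HasDerivWithinAt (fun s => fw r (s, v))
    (-exp (fl D r (u, v) - 2 * fw r (u, v))) (Iic (-R)) u
  constr : ∀ q ∈ D, fa D r q * pdv D (fk D r m) q - pdv D (fa D r) q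
    + fa D r q * exp (fk D r m q - fw r q) - fθ D r φ q ^ 2 = 0

/-- The terms in `m` cancel once the equations are written for `rλ`, `log κ`, `log (-rν)` and
`log r`. -/
theorem regOld (h : EFSol R D r m φ) (sg : Signs R D r m) : RegOld R D r m φ := by
  have hU := uniqueDiffOn_of_relOpen h.relOpen
  have e2 : (2 : WithTop ℕ∞) = 1 + 1 := by norm_num
  have one_two : (1 : WithTop ℕ∞) ≤ 2 := by norm_num
  have Cr := h.hr.of_le one_two
  have Cm := h.hm.of_le one_two
  have Cl : ContDiffOn ℝ 1 (pdv D r) D := contDiffOn_pdv hU (e2 ▸ h.hr)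
  have Cn : ContDiffOn ℝ 1 (pdu D r) D := contDiffOn_pdu hU (e2 ▸ h.hr)
  have Cφv : ContDiffOn ℝ 1 (pdv D φ) D := contDiffOn_pdv hU (e2 ▸ h.hphi)
  have Cφu : ContDiffOn ℝ 1 (pdu D φ) D := contDiffOn_pdu hU (e2 ▸ h.hphi)
  have dr := Cr.differentiableOn one_ne_zero
  have dm := Cm.differentiableOn one_ne_zero
  have hl0 : ∀ q ∈ D, 0 < -(r q * pdu D r q) := fun q hq => by
    have := mul_pos (sg.r_pos q hq) (neg_pos.2 (sg.nu q hq)); linarith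
  have hk0 : ∀ q ∈ D, 0 < pdv D r q * r q / (r q - 2 * m q) := fun q hq =>
    div_pos (mul_pos (sg.lam q hq) (sg.r_pos q hq)) (sg.one_mu q hq)
  have el : ∀ q ∈ D, exp (fl D r q) = -(r q * pdu D r q) := fun q hq => exp_log (hl0 q hq)
  have ek : ∀ q ∈ D, exp (fk D r m q) = pdv D r q * r q / (r q - 2 * m q) := fun q hq =>
    exp_log (hk0 q hq)
  have ew : ∀ q ∈ D, exp (fw r q) = r q := fun q hq => exp_log (sg.r_pos q hq)
  have ca : ContDiffOn ℝ 1 (fa D r) D := Cr.mul Cl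
  have cθ : ContDiffOn ℝ 1 (fθ D r φ) D := Cr.mul Cφv
  have cζ : ContDiffOn ℝ 1 (fζ D r φ) D := Cr.mul Cφu
  have cw : ContDiffOn ℝ 1 (fw r) D := Cr.log fun q hq => (sg.r_pos q hq).ne'
  have cl : ContDiffOn ℝ 1 (fl D r) D := (Cr.mul Cn).neg.log fun q hq => (hl0 q hq).ne'
  have ck : ContDiffOn ℝ 1 (fk D r m) D :=
    ((Cl.mul Cr).div (Cr.sub (contDiffOn_const.mul Cm)) fun q hq => (sg.one_mu q hq).ne').log
      fun q hq => (hk0 q hq).ne'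
  -- the second-order equations in denominator-free form
  have hlam : ∀ q ∈ D, pdu D (pdv D r) q
      = 2 * pdv D r q * pdu D r q * m q / (r q * (r q - 2 * m q)) := fun q hq => by
    have h1 := (sg.r_pos q hq).ne'
    have h2 := (sg.one_mu q hq).ne'
    have h3 : 1 - 2 * m q / r q = (r q - 2 * m q) / r q := by field_simp
    rw [show pdu D (pdv D r) q = _ from h.eq_lam q hq, h3]
    field_simp
  have hnu : ∀ q ∈ D, pdv D (pdu D r) q
      = 2 * pdv D r q * pdu D r q * m q / (r q * (r q - 2 * m q)) := fun q hq => by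
    have h1 := (sg.r_pos q hq).ne'
    have h2 := (sg.one_mu q hq).ne'
    have h3 : 1 - 2 * m q / r q = (r q - 2 * m q) / r q := by field_simp
    rw [show pdv D (pdu D r) q = _ from h.eq_nu q hq, h3]
    field_simp
  have hmu : ∀ q ∈ D, pdu D m q
      = (r q - 2 * m q) * (r q * pdu D φ q) ^ 2 / (2 * r q * pdu D r q) := fun q hq => by
    have h1 := (sg.r_pos q hq).ne'
    have h2 := (sg.nu q hq).ne
    have h3 : 1 - 2 * m q / r q = (r q - 2 * m q) / r q := by field_simp
    have h4 := h.eq_mu q hq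
    rw [h3] at h4
    rw [eq_div_iff (by positivity)]
    field_simp at h4
    linear_combination (r q) * h4
  have hmv : ∀ q ∈ D, pdv D m q
      = (r q - 2 * m q) * (r q * pdv D φ q) ^ 2 / (2 * r q * pdv D r q) := fun q hq => by
    have h1 := (sg.r_pos q hq).ne'
    have h2 := (sg.lam q hq).ne'
    have h3 : 1 - 2 * m q / r q = (r q - 2 * m q) / r q := by field_simp
    have h4 := h.eq_mv q hq
    rw [h3] at h4
    rw [eq_div_iff (by positivity)]
    field_simp at h4
    linear_combination (r q) * h4
  have Du : ∀ {f : ℝ × ℝ → ℝ}, ContDiffOn ℝ 1 f D → ∀ u v, (u, v) ∈ D →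
      HasDerivWithinAt (fun s => f (s, v)) (pdu D f (u, v)) (Iic (-R)) u := fun hf u v hq =>
    hasDeriv_u h.relOpen (hf.differentiableOn one_ne_zero) hq
  have Dv : ∀ {f : ℝ × ℝ → ℝ}, ContDiffOn ℝ 1 f D → ∀ u v, (u, v) ∈ D →
      HasDerivWithinAt (fun s => f (u, s)) (pdv D f (u, v)) (Ici R) v := fun hf u v hq =>
    hasDeriv_v h.relOpen (hf.differentiableOn one_ne_zero) hq
  refine ⟨ca, ck, cθ, cl, cζ, cw, el, ek, ew, ?_, ?_, ?_, ?_, ?_, ?_, ?_, ?_⟩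
  · intro u v hq
    have h1 := (sg.r_pos _ hq).ne'
    have h2 := (sg.one_mu _ hq).ne'
    refine ((Du Cr u v hq).mul (Du Cl u v hq)).congr_deriv ?_
    rw [hlam _ hq, exp_sub, exp_add, el _ hq, ek _ hq, ew _ hq]
    field_simp
    ring
  · intro u v hq
    have h1 := (sg.r_pos _ hq).ne'
    have h2 := (sg.one_mu _ hq).ne'
    have h3 := (sg.lam _ hq).ne'
    have h4 := (sg.nu _ hq).ne
    refine ((((Du Cl u v hq).mul (Du Cr u v hq)).div
      ((Du Cr u v hq).sub ((Du Cm u v hq).const_mul 2)) h2).log (hk0 _ hq).ne').congr_deriv ?_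
    rw [exp_neg, el _ hq]
    simp only [Pi.mul_apply, Pi.sub_apply, Pi.div_apply, fζ]
    rw [hlam _ hq, hmu _ hq]
    field_simp
    ring
  · intro u v hq
    have h1 := (sg.r_pos _ hq).ne'
    refine (Du cθ u v hq).congr_deriv ?_
    rw [show pdu D (fθ D r φ) (u, v) = _ from h.eq_theta _ hq, exp_neg, two_mul, exp_add, ew _ hq]
    simp only [fζ, fa]
    field_simp
  · intro u v hq
    have h1 := (sg.r_pos _ hq).ne'
    have h2 := (sg.one_mu _ hq).ne'
    have h4 := (sg.nu _ hq).ne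
    refine ((((Dv Cr u v hq).mul (Dv Cn u v hq)).neg).log (hl0 _ hq).ne').congr_deriv ?_
    rw [exp_sub, ek _ hq, ew _ hq]
    simp only [Pi.mul_apply, Pi.neg_apply]
    rw [hnu _ hq]
    field_simp
    ring
  · intro u v hq
    have h1 := (sg.r_pos _ hq).ne'
    refine (Dv cζ u v hq).congr_deriv ?_
    rw [show pdv D (fζ D r φ) (u, v) = _ from h.eq_zeta _ hq, exp_sub, two_mul, exp_add, ew _ hq,
      el _ hq]
    simp only [fθ]
    field_simp
  · intro u v hq
    have h1 := (sg.r_pos _ hq).ne'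
    refine ((Dv Cr u v hq).log h1).congr_deriv ?_
    rw [exp_neg, two_mul, exp_add, ew _ hq]
    simp only [fa]
    field_simp
  · intro u v hq
    have h1 := (sg.r_pos _ hq).ne'
    refine ((Du Cr u v hq).log h1).congr_deriv ?_
    rw [exp_sub, two_mul, exp_add, ew _ hq, el _ hq]
    field_simp
  · rintro ⟨u, v⟩ hq
    have h1 := (sg.r_pos _ hq).ne'
    have h2 := (sg.one_mu _ hq).ne'
    have h3 := (sg.lam _ hq).ne'
    have hUv : UniqueDiffWithinAt ℝ (Ici R) v := uniqueDiffOn_Ici R v (h.subset hq).2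
    have Ek := hUv.eq_deriv _ (Dv ck u v hq)
      ((((Dv Cl u v hq).mul (Dv Cr u v hq)).div
      ((Dv Cr u v hq).sub ((Dv Cm u v hq).const_mul 2)) h2).log (hk0 _ hq).ne')
    have Ea := hUv.eq_deriv _ (Dv ca u v hq) ((Dv Cr u v hq).mul (Dv Cl u v hq))
    rw [Ek, Ea, exp_sub, ek _ hq, ew _ hq]
    simp only [Pi.mul_apply, Pi.sub_apply, Pi.div_apply, fθ, fa]
    rw [hmv _ hq]
    field_simp
    ring

end Development

/-! ### A priori bounds -/

/-- Comparison with a majorant, integrating forward from the left endpoint. -/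
theorem abs_le_of_deriv {a b : ℝ} {f f' B B' : ℝ → ℝ}
    (hf : ∀ x ∈ Icc a b, HasDerivWithinAt f (f' x) (Icc a b) x)
    (hB : ∀ x ∈ Icc a b, HasDerivWithinAt B (B' x) (Icc a b) x)
    (h : ∀ x ∈ Icc a b, |f' x| ≤ B' x) (hab : a ≤ b) (h0 : |f a| ≤ B a) : |f b| ≤ B b := by
  have ha : a ∈ Icc a b := ⟨le_rfl, hab⟩
  have hb : b ∈ Icc a b := ⟨hab, le_rfl⟩
  have m1 := monotoneOn_Icc (fun x hx => (hB x hx).fun_sub (hf x hx))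
    (fun x hx => by linarith [(abs_le.1 (h x hx)).2]) ha hb hab
  have m2 := monotoneOn_Icc (fun x hx => (hB x hx).fun_add (hf x hx))
    (fun x hx => by linarith [(abs_le.1 (h x hx)).1]) ha hb hab
  have := abs_le.1 h0
  simp only at m1 m2
  exact abs_le.2 ⟨by linarith, by linarith⟩

/-- Comparison with a majorant, integrating backward from the right endpoint. -/
theorem abs_le_of_deriv' {a b : ℝ} {f f' B B' : ℝ → ℝ}
    (hf : ∀ x ∈ Icc a b, HasDerivWithinAt f (f' x) (Icc a b) x)
    (hB : ∀ x ∈ Icc a b, HasDerivWithinAt B (B' x) (Icc a b) x)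
    (h : ∀ x ∈ Icc a b, |f' x| ≤ -B' x) (hab : a ≤ b) (h0 : |f b| ≤ B b) : |f a| ≤ B a := by
  have ha : a ∈ Icc a b := ⟨le_rfl, hab⟩
  have hb : b ∈ Icc a b := ⟨hab, le_rfl⟩
  have m1 := antitoneOn_Icc (fun x hx => (hB x hx).fun_sub (hf x hx))
    (fun x hx => by linarith [(abs_le.1 (h x hx)).1]) ha hb hab
  have m2 := antitoneOn_Icc (fun x hx => (hB x hx).fun_add (hf x hx))
    (fun x hx => by linarith [(abs_le.1 (h x hx)).2]) ha hb hab
  have := abs_le.1 h0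
  simp only at m1 m2
  exact abs_le.2 ⟨by linarith, by linarith⟩

section Development
variable {R C M m₀ : ℝ} {D : Set (ℝ × ℝ)} {r m φ : ℝ × ℝ → ℝ}

/-- If `log r ≤ P` on the part of `D` in the past of a point, then the regularized state is bounded
there. The quantities `log r`, `log (-rν)`, `rλ` and `log κ` are monotone along characteristics, which
gives all the lower bounds. A weighted maximum principle then bounds `|ζ|` by `e^l = -rν` and `|θ|` by
`a = rλ`, and integrating the equations for `k`, `l`, `a` in this order gives the upper bounds. -/
theorem apriori (hR : 0 < R) (h : EFSol R D r m φ) (hic : CharIC R C M m₀ D r m φ)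
    (hRM : 2 * m₀ < R) {u₀ v₀ P : ℝ} (hu₀ : u₀ ≤ -R) (hv₀ : R ≤ v₀)
    (hP : ∀ q ∈ D, u₀ ≤ q.1 → q.2 ≤ v₀ → fw r q ≤ P) :
    ∃ N, 0 ≤ N ∧ ∀ q ∈ D, u₀ ≤ q.1 → q.2 ≤ v₀ → ‖st D r m φ q‖ ≤ N := by
  have sg := signs h hic hRM
  have ro := regOld h sg
  -- restriction of one-sided derivatives to segments of a rectangle in the past of a point of `D`
  have hU : ∀ {u v : ℝ}, (u, v) ∈ D → ∀ s ∈ Icc u (-R), (s, v) ∈ D := fun hq s hs =>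
    past_rect hic hq hs ⟨(h.subset hq).2, le_rfl⟩
  have hV : ∀ {u v : ℝ}, (u, v) ∈ D → ∀ s ∈ Icc R v, (u, s) ∈ D := fun hq s hs =>
    past_rect hic hq ⟨le_rfl, (h.subset hq).1⟩ hs
  have mu : ∀ u : ℝ, Icc u (-R) ⊆ Iic (-R) := fun u => Icc_subset_Iic_self
  have mv : ∀ v : ℝ, Icc R v ⊆ Ici R := fun v => Icc_subset_Ici_self
  have hapos : ∀ q ∈ D, 0 < fa D r q := fun q hq => mul_pos (sg.r_pos q hq) (sg.lam q hq)
  -- monotonicity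
  have w_v : ∀ {u v}, (u, v) ∈ D → MonotoneOn (fun s => fw r (u, s)) (Icc R v) := fun hq =>
    monotoneOn_Icc (fun s hs => (ro.hw _ _ (hV hq s hs)).mono (mv _))
      fun s hs => (mul_pos (hapos _ (hV hq s hs)) (exp_pos _)).le
  have w_u : ∀ {u v}, (u, v) ∈ D → AntitoneOn (fun s => fw r (s, v)) (Icc u (-R)) := fun hq =>
    antitoneOn_Icc (fun s hs => (ro.hwu _ _ (hU hq s hs)).mono (mu _))
      fun s hs => neg_nonpos.2 (exp_pos _).le
  have l_v : ∀ {u v}, (u, v) ∈ D → MonotoneOn (fun s => fl D r (u, s)) (Icc R v) := fun hq =>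
    monotoneOn_Icc (fun s hs => (ro.hl _ _ (hV hq s hs)).mono (mv _)) fun s hs => (exp_pos _).le
  have a_u : ∀ {u v}, (u, v) ∈ D → AntitoneOn (fun s => fa D r (s, v)) (Icc u (-R)) := fun hq =>
    antitoneOn_Icc (fun s hs => (ro.ha _ _ (hU hq s hs)).mono (mu _))
      fun s hs => neg_nonpos.2 (exp_pos _).le
  have k_u : ∀ {u v}, (u, v) ∈ D → AntitoneOn (fun s => fk D r m (s, v)) (Icc u (-R)) := fun hq =>
    antitoneOn_Icc (fun s hs => (ro.hk _ _ (hU hq s hs)).mono (mu _))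
      fun s hs => neg_nonpos.2 (mul_nonneg (sq_nonneg _) (exp_pos _).le)
  have w_low : ∀ {u v}, (u, v) ∈ D → log R ≤ fw r (u, v) := fun {u v} hq => by
    have hQ := h.subset hq
    have hq' := hic.ray_in u hQ.1
    have h1 := w_v hq ⟨le_rfl, hQ.2⟩ ⟨hQ.2, le_rfl⟩ hQ.2
    have h2 := w_u hq' ⟨le_rfl, hQ.1⟩ ⟨hQ.1, le_rfl⟩ hQ.1
    simp only [fw] at h1 h2 ⊢
    rw [hic.r_corner] at h2
    exact h2.trans h1
  have l_data : ∀ u ≤ -R, fl D r (u, R) = fw r (u, R) := fun u hu => by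
    simp [fl, fw, hic.nu_one u hu]
  have a_data : ∀ v ≥ R, fa D r (-R, v) = exp (fw r (-R, v)) := fun v hv => by
    rw [ro.ew _ (hic.ray_out v hv)]
    simp [fa, hic.lam_one v hv]
  have l_low : ∀ {u v}, (u, v) ∈ D → log R ≤ fl D r (u, v) := fun {u v} hq => by
    have hQ := h.subset hq
    have h1 := l_v hq ⟨le_rfl, hQ.2⟩ ⟨hQ.2, le_rfl⟩ hQ.2
    have h2 := w_low (hic.ray_in u hQ.1)
    rw [← l_data u hQ.1] at h2
    exact h2.trans h1
  have a_low : ∀ {u v}, (u, v) ∈ D → R ≤ fa D r (u, v) := fun {u v} hq => by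
    have hQ := h.subset hq
    have h1 := a_u hq ⟨le_rfl, hQ.1⟩ ⟨hQ.1, le_rfl⟩ hQ.1
    have h2 := w_low (hic.ray_out v hQ.2)
    have h3 := a_data v hQ.2
    have h4 := exp_le_exp.2 h2
    rw [exp_log hR, ← h3] at h4
    exact h4.trans h1
  -- bounds for the data
  have slice_u : ∀ {f : ℝ × ℝ → ℝ}, ContDiffOn ℝ 1 f D →
      ∃ B, ∀ u ∈ Icc u₀ (-R), |f (u, R)| ≤ B := fun hf =>
    (isCompact_Icc.exists_bound_of_continuousOn (f := fun u => _)
      (hf.continuousOn.comp (f := fun u => (u, R)) (by fun_prop) fun u hu => hic.ray_in u hu.2))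
  have slice_v : ∀ {f : ℝ × ℝ → ℝ}, ContDiffOn ℝ 1 f D →
      ∃ B, ∀ v ∈ Icc R v₀, |f (-R, v)| ≤ B := fun hf =>
    (isCompact_Icc.exists_bound_of_continuousOn (f := fun v => _)
      (hf.continuousOn.comp (f := fun v => (-R, v)) (by fun_prop) fun v hv => hic.ray_out v hv.1))
  obtain ⟨A₁, hA₁⟩ := slice_u ro.cζ
  obtain ⟨A₂, hA₂⟩ := slice_v ro.cθ
  obtain ⟨K₀, hK₀⟩ := slice_v ro.ck
  set A := max A₁ A₂ with hA
  have hA0 : 0 ≤ A := (abs_nonneg _).trans ((hA₁ u₀ ⟨le_rfl, hu₀⟩).trans (le_max_left _ _))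
  have dw2v : ∀ {u v}, (u, v) ∈ D → HasDerivWithinAt (fun s => exp (2 * fw r (u, s)))
      (2 * fa D r (u, v)) (Ici R) v := fun {u v} hq =>
    ((ro.hw _ _ hq).const_mul 2).exp.congr_deriv (by
      rw [exp_neg]; field_simp)
  have dw2u : ∀ {u v}, (u, v) ∈ D → HasDerivWithinAt (fun s => exp (2 * fw r (s, v)))
      (-(2 * exp (fl D r (u, v)))) (Iic (-R)) u := fun {u v} hq =>
    ((ro.hwu _ _ hq).const_mul 2).exp.congr_deriv (by
      rw [exp_sub]; field_simp)
  -- Let `S` be the maximum over the past rectangle of `|ζ| / (e^l r²)` and `|θ| / (a r²)`. Inserting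
  -- these bounds into `∂ᵥζ` and `∂ᵤθ` and integrating, where `∂ᵥ(r²) = 2a` and `∂ᵤ(r²) = -2e^l`,
  -- returns `S ≤ A / R³ + S / 2`, with `A` bounding the data of `ζ` and `θ`.
  have field : ∀ q ∈ D, u₀ ≤ q.1 → q.2 ≤ v₀ →
      |fζ D r φ q| ≤ 2 * A / R ^ 3 * exp (2 * P) * exp (fl D r q) ∧
      |fθ D r φ q| ≤ 2 * A / R ^ 3 * exp (2 * P) * fa D r q := by
    rintro ⟨u, v⟩ hq hu hv
    have hQ := h.subset hq
    have hK : Icc u (-R) ×ˢ Icc R v ⊆ D := fun x hx => past_rect hic hq hx.1 hx.2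
    have hcomp : IsCompact (Icc u (-R) ×ˢ Icc R v) := isCompact_Icc.prod isCompact_Icc
    have hself : ((u, v) : ℝ × ℝ) ∈ Icc u (-R) ×ˢ Icc R v :=
      ⟨⟨le_rfl, hQ.1⟩, ⟨hQ.2, le_rfl⟩⟩
    have c1 := ro.cζ.continuousOn.mono hK
    have c2 := ro.cl.continuousOn.mono hK
    have c3 := ro.cw.continuousOn.mono hK
    have c4 := ro.cθ.continuousOn.mono hK
    have c5 := ro.ca.continuousOn.mono hK
    have cG : ContinuousOn (fun q => max (|fζ D r φ q| / (exp (fl D r q) * exp (2 * fw r q)))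
        (|fθ D r φ q| / (fa D r q * exp (2 * fw r q)))) (Icc u (-R) ×ˢ Icc R v) := by
      refine ContinuousOn.sup (c1.abs.div (by fun_prop) fun q _ => by positivity)
        (c4.abs.div (by fun_prop) fun q hq => ?_)
      exact (mul_pos (hapos q (hK hq)) (exp_pos _)).ne'
    obtain ⟨x, hx, hmaxx⟩ := hcomp.exists_isMaxOn ⟨_, hself⟩ cG
    set S := max (|fζ D r φ x| / (exp (fl D r x) * exp (2 * fw r x)))
        (|fθ D r φ x| / (fa D r x * exp (2 * fw r x))) with hS
    have hS0 : 0 ≤ S := le_max_of_le_left (by positivity)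
    have bζ : ∀ q ∈ Icc u (-R) ×ˢ Icc R v,
        |fζ D r φ q| ≤ S * (exp (fl D r q) * exp (2 * fw r q)) := fun q hq =>
      (div_le_iff₀ (by positivity)).1 ((le_max_left _ _).trans (hmaxx hq))
    have bθ : ∀ q ∈ Icc u (-R) ×ˢ Icc R v,
        |fθ D r φ q| ≤ S * (fa D r q * exp (2 * fw r q)) := fun q hq =>
      (div_le_iff₀ (mul_pos (hapos q (hK hq)) (exp_pos _))).1
        ((le_max_right _ _).trans (hmaxx hq))
    -- `l` increases in `v`, so `e^l` may be frozen at the endpoint when integrating `∂ᵥζ`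
    have iζ : |fζ D r φ x| ≤ A + S * exp (fl D r x) / 2 * exp (2 * fw r x) := by
      obtain ⟨x₁, x₂⟩ := x
      have hxD := hK hx
      have hxQ := h.subset hxD
      refine abs_le_of_deriv (a := R) (b := x₂) (f := fun s => fζ D r φ (x₁, s))
        (B := fun s => A + S * exp (fl D r (x₁, x₂)) / 2 * exp (2 * fw r (x₁, s)))
        (fun s hs => (ro.hζ _ _ (hV hxD s hs)).mono (mv _))
        (fun s hs => (((dw2v (hV hxD s hs)).const_mul _).const_add _).mono (mv _))
        (fun s hs => ?_) hxQ.2 ?_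
      · have hl := exp_le_exp.2 (l_v hxD hs ⟨hxQ.2, le_rfl⟩ hs.2)
        have hb := bθ (x₁, s) ⟨hx.1, hs.1, hs.2.trans hx.2.2⟩
        have ha := (hapos _ (hV hxD s hs)).le
        rw [abs_mul, abs_of_pos (exp_pos _), exp_sub]
        calc _ ≤ S * (fa D r (x₁, s) * exp (2 * fw r (x₁, s)))
                * (exp (fl D r (x₁, s)) / exp (2 * fw r (x₁, s))) := by gcongr
          _ = S * fa D r (x₁, s) * exp (fl D r (x₁, s)) := by field_simp
          _ ≤ S * fa D r (x₁, s) * exp (fl D r (x₁, x₂)) :=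
            mul_le_mul_of_nonneg_left hl (by positivity)
          _ = _ := by ring
      · refine (hA₁ x₁ ⟨hu.trans hx.1.1, hx.1.2⟩).trans ((le_max_left A₁ A₂).trans ?_)
        exact le_add_of_nonneg_right (by positivity)
    -- `a` is nonincreasing in `u`, so it may be frozen at `x₁` when integrating `∂ᵤθ`
    have iθ : |fθ D r φ x| ≤ A + S * fa D r x / 2 * exp (2 * fw r x) := by
      obtain ⟨x₁, x₂⟩ := x
      have hxD := hK hx
      have hxQ := h.subset hxD
      have ha' := (hapos _ hxD).le
      refine abs_le_of_deriv' (a := x₁) (b := -R) (f := fun s => fθ D r φ (s, x₂))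
        (B := fun s => A + S * fa D r (x₁, x₂) / 2 * exp (2 * fw r (s, x₂)))
        (fun s hs => (ro.hθ _ _ (hU hxD s hs)).mono (mu _))
        (fun s hs => (((dw2u (hU hxD s hs)).const_mul _).const_add _).mono (mu _))
        (fun s hs => ?_) hxQ.1 ?_
      · have hl := a_u hxD ⟨le_rfl, hxQ.1⟩ hs hs.1
        have hb := bζ (s, x₂) ⟨⟨hx.1.1.trans hs.1, hs.2⟩, hx.2⟩
        have ha := (hapos _ (hU hxD s hs)).le
        rw [abs_neg, abs_mul, abs_mul, abs_of_pos (exp_pos _), exp_neg, abs_of_nonneg ha]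
        calc _ ≤ S * (exp (fl D r (s, x₂)) * exp (2 * fw r (s, x₂))) * fa D r (s, x₂)
                * (exp (2 * fw r (s, x₂)))⁻¹ := by gcongr
          _ = S * exp (fl D r (s, x₂)) * fa D r (s, x₂) := by field_simp
          _ ≤ S * exp (fl D r (s, x₂)) * fa D r (x₁, x₂) :=
            mul_le_mul_of_nonneg_left hl (by positivity)
          _ = _ := by ring
      · refine (hA₂ x₂ ⟨hx.2.1, hx.2.2.trans hv⟩).trans ((le_max_right A₁ A₂).trans ?_)
        exact le_add_of_nonneg_right (by positivity)
    have hS1 : S ≤ 2 * A / R ^ 3 := by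
      have hxD := hK hx
      have h1 : R ≤ exp (fl D r x) := by
        rw [← exp_log hR]; exact exp_le_exp.2 (l_low (u := x.1) (v := x.2) hxD)
      have h2 : R ≤ fa D r x := a_low (u := x.1) (v := x.2) hxD
      have h3 : R ^ 2 ≤ exp (2 * fw r x) := by
        rw [two_mul, exp_add, ← sq]
        refine pow_le_pow_left₀ hR.le ?_ 2
        rw [← exp_log hR]; exact exp_le_exp.2 (w_low (u := x.1) (v := x.2) hxD)
      have key : ∀ y z : ℝ, R ≤ y → z ≤ A + S * y / 2 * exp (2 * fw r x) →
          z / (y * exp (2 * fw r x)) ≤ A / R ^ 3 + S / 2 := fun y z hy hz => by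
        have hy0 : 0 < y := hR.trans_le hy
        rw [div_le_iff₀ (by positivity)]
        refine hz.trans ?_
        have : R ^ 3 ≤ y * exp (2 * fw r x) := by
          calc R ^ 3 = R * R ^ 2 := by ring
            _ ≤ _ := by gcongr
        have h5 : A ≤ A / R ^ 3 * (y * exp (2 * fw r x)) := by
          calc A = A / R ^ 3 * R ^ 3 := by field_simp
            _ ≤ _ := by gcongr
        linarith
      have := max_le (key _ _ h1 iζ) (key _ _ h2 iθ)
      rw [← hS] at this
      have e : 2 * A / R ^ 3 = 2 * (A / R ^ 3) := by ring
      linarith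
    have hPq := exp_le_exp.2 (mul_le_mul_of_nonneg_left (hP _ hq hu hv) zero_le_two)
    have ha := (hapos _ hq).le
    constructor
    · refine (bζ _ hself).trans ?_
      rw [mul_assoc, mul_comm (exp (2 * P))]
      gcongr
    · refine (bθ _ hself).trans ?_
      rw [mul_assoc, mul_comm (exp (2 * P))]
      gcongr
  set X := 2 * A / R ^ 3 * exp (2 * P) with hX
  have hX0 : 0 ≤ X := by positivity
  -- `∂ᵤ(log κ) = -ζ² e^{-l} ≥ -X² e^l = (X² / 2) ∂ᵤ(r²)`
  have kb : ∀ q ∈ D, u₀ ≤ q.1 → q.2 ≤ v₀ → |fk D r m q| ≤ K₀ + X ^ 2 / 2 * exp (2 * P) := by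
    rintro ⟨u, v⟩ hq hu hv
    have hQ := h.subset hq
    have h1 := k_u hq ⟨le_rfl, hQ.1⟩ ⟨hQ.1, le_rfl⟩ hQ.1
    have h0 := abs_le.1 (hK₀ v ⟨hQ.2, hv⟩)
    have hPq := exp_le_exp.2 (mul_le_mul_of_nonneg_left (hP _ hq hu hv) zero_le_two)
    have hm := monotoneOn_Icc (a := u) (b := -R)
      (f := fun s => fk D r m (s, v) - X ^ 2 / 2 * exp (2 * fw r (s, v)))
      (fun s hs => ((ro.hk _ _ (hU hq s hs)).fun_sub
        ((dw2u (hU hq s hs)).const_mul (X ^ 2 / 2))).mono (mu _))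
      (fun s hs => by
        have := (field _ (hU hq s hs) (hu.trans hs.1) hv).1
        have h2 : fζ D r φ (s, v) ^ 2 ≤ (X * exp (fl D r (s, v))) ^ 2 := by
          rw [← sq_abs]; exact pow_le_pow_left₀ (abs_nonneg _) this 2
        have h3 := mul_le_mul_of_nonneg_right h2 (exp_pos (-fl D r (s, v))).le
        have h4 : (X * exp (fl D r (s, v))) ^ 2 * exp (-fl D r (s, v))
            = X ^ 2 * exp (fl D r (s, v)) := by rw [exp_neg]; field_simp
        linarith) ⟨le_rfl, hQ.1⟩ ⟨hQ.1, le_rfl⟩ hQ.1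
    have h5 : 0 ≤ X ^ 2 / 2 * exp (2 * fw r (-R, v)) := by positivity
    have h6 := mul_le_mul_of_nonneg_left hPq (by positivity : 0 ≤ X ^ 2 / 2)
    have h7 : 0 ≤ X ^ 2 / 2 * exp (2 * P) := by positivity
    simp only at hm h1 h6
    exact abs_le.2 ⟨by linarith, by linarith⟩
  set K₁ := K₀ + X ^ 2 / 2 * exp (2 * P) with hK₁
  -- bound for `log (-rν)`
  have lb : ∀ q ∈ D, u₀ ≤ q.1 → q.2 ≤ v₀ → fl D r q ≤ P + exp (K₁ - log R) * (v₀ - R) := by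
    rintro ⟨u, v⟩ hq hu hv
    have hQ := h.subset hq
    have hm := antitoneOn_Icc (a := R) (b := v)
      (f := fun s => fl D r (u, s) - exp (K₁ - log R) * s)
      (fun s hs => ((ro.hl _ _ (hV hq s hs)).fun_sub
        ((hasDerivWithinAt_id _ _).const_mul (exp (K₁ - log R)))).mono (mv _))
      (fun s hs => by
        have h1 := (abs_le.1 (kb _ (hV hq s hs) hu (hs.2.trans hv))).2
        have h2 := w_low (hV hq s hs)
        have := exp_le_exp.2 (by linarith : fk D r m (u, s) - fw r (u, s) ≤ K₁ - log R)
        linarith) ⟨le_rfl, hQ.2⟩ ⟨hQ.2, le_rfl⟩ hQ.2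
    have h3 := hP _ (hic.ray_in u hQ.1) hu hv₀
    have h4 := l_data u hQ.1
    simp only at hm
    have h5 := mul_le_mul_of_nonneg_left hv (exp_pos (K₁ - log R)).le
    simp only at h5
    linarith
  set L := P + exp (K₁ - log R) * (v₀ - R) with hL
  -- bound for `rλ`
  have ab : ∀ q ∈ D, u₀ ≤ q.1 → q.2 ≤ v₀ →
      fa D r q ≤ exp P + exp (L + K₁ - log R) * (-R - u₀) := by
    rintro ⟨u, v⟩ hq hu hv
    have hQ := h.subset hq
    have hm := monotoneOn_Icc (a := u) (b := -R)
      (f := fun s => fa D r (s, v) + exp (L + K₁ - log R) * s)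
      (fun s hs => ((ro.ha _ _ (hU hq s hs)).fun_add
        ((hasDerivWithinAt_id _ _).const_mul (exp (L + K₁ - log R)))).mono (mu _))
      (fun s hs => by
        have h1 := (abs_le.1 (kb _ (hU hq s hs) (hu.trans hs.1) hv)).2
        have h2 := w_low (hU hq s hs)
        have h3 := lb _ (hU hq s hs) (hu.trans hs.1) hv
        have := exp_le_exp.2 (by linarith :
          fl D r (s, v) + fk D r m (s, v) - fw r (s, v) ≤ L + K₁ - log R)
        linarith) ⟨le_rfl, hQ.1⟩ ⟨hQ.1, le_rfl⟩ hQ.1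
    have h3 := exp_le_exp.2 (hP _ (hic.ray_out v hQ.2) hu₀ hv)
    have h4 := a_data v hQ.2
    simp only at hm
    have h5 := mul_le_mul_of_nonneg_left hu (exp_pos (L + K₁ - log R)).le
    simp only at h5
    linarith
  set A' := exp P + exp (L + K₁ - log R) * (-R - u₀) with hA'
  have hA'0 : 0 ≤ A' :=
    add_nonneg (exp_pos _).le (mul_nonneg (exp_pos _).le (by linarith))
  have hK₁0 : 0 ≤ K₁ := (abs_nonneg _).trans (kb _ (hic.ray_in u₀ hu₀) le_rfl hv₀)
  refine ⟨A' + K₁ + X * A' + (|log R| + |L|) + X * exp L + (|log R| + |P|), by positivity,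
    fun q hq hu hv => ?_⟩
  have e1 : 0 ≤ X * A' := by positivity
  have e2 : 0 ≤ X * exp L := by positivity
  have e3 := abs_nonneg (log R)
  have e4 := abs_nonneg L
  have e5 := abs_nonneg P
  have f1 := ab q hq hu hv
  have f2 := hapos q hq
  have f3 := kb q hq hu hv
  have f4 := field q hq hu hv
  have f5 := lb q hq hu hv
  have f6 := l_low (u := q.1) (v := q.2) hq
  have f7 := w_low (u := q.1) (v := q.2) hq
  have f8 := hP q hq hu hv
  have g1 := mul_le_mul_of_nonneg_left f1 hX0
  have g2 := mul_le_mul_of_nonneg_left (exp_le_exp.2 f5) hX0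
  have n1 := neg_abs_le (log R)
  have n2 := le_abs_self L
  have n3 := le_abs_self P
  refine norm_vec_le.2 ⟨⟨?_, ?_, ?_⟩, ?_, ?_, ?_⟩
  · change |fa D r q| ≤ _
    rw [abs_of_pos f2]; linarith
  · change |fk D r m q| ≤ _
    linarith
  · change |fθ D r φ q| ≤ _
    linarith [f4.2]
  · change |fl D r q| ≤ _
    exact abs_le.2 ⟨by linarith, by linarith⟩
  · change |fζ D r φ q| ≤ _
    linarith [f4.1]
  · change |fw r q| ≤ _
    exact abs_le.2 ⟨by linarith, by linarith⟩

end Development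

/-! ### Locality and agreement of solutions -/

/-- The derivative within a set depends only on the germs of the set and of the function. -/
theorem fderivWithin_local {D₁ D₂ O : Set (ℝ × ℝ)} (hO : IsOpen O) (hD : D₁ ∩ O = D₂ ∩ O)
    {f g : ℝ × ℝ → ℝ} (hfg : EqOn f g (D₁ ∩ O)) {x : ℝ × ℝ} (hx : x ∈ D₁ ∩ O) :
    fderivWithin ℝ f D₁ x = fderivWithin ℝ g D₂ x := by
  rw [← fderivWithin_inter (hO.mem_nhds hx.2), ← fderivWithin_inter (s := D₂) (hO.mem_nhds hx.2),
    ← hD]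
  exact fderivWithin_congr hfg (hfg hx)

theorem pdu_local {D₁ D₂ O : Set (ℝ × ℝ)} (hO : IsOpen O) (hD : D₁ ∩ O = D₂ ∩ O)
    {f g : ℝ × ℝ → ℝ} (hfg : EqOn f g (D₁ ∩ O)) : EqOn (pdu D₁ f) (pdu D₂ g) (D₁ ∩ O) :=
  fun x hx => by unfold pdu; rw [fderivWithin_local hO hD hfg hx]

theorem pdv_local {D₁ D₂ O : Set (ℝ × ℝ)} (hO : IsOpen O) (hD : D₁ ∩ O = D₂ ∩ O)
    {f g : ℝ × ℝ → ℝ} (hfg : EqOn f g (D₁ ∩ O)) : EqOn (pdv D₁ f) (pdv D₂ g) (D₁ ∩ O) :=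
  fun x hx => by unfold pdv; rw [fderivWithin_local hO hD hfg hx]

theorem contDiffWithinAt_local {D₁ D₂ O : Set (ℝ × ℝ)} (hO : IsOpen O) (hD : D₁ ∩ O = D₂ ∩ O)
    {f g : ℝ × ℝ → ℝ} (hfg : EqOn f g (D₁ ∩ O)) {n : WithTop ℕ∞} (hg : ContDiffOn ℝ n g D₂)
    {x : ℝ × ℝ} (hx : x ∈ D₁ ∩ O) : ContDiffWithinAt ℝ n f D₁ x := by
  rw [← contDiffWithinAt_inter (hO.mem_nhds hx.2)]
  have hx2 : x ∈ D₂ ∩ O := hD ▸ hx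
  have := (hg x hx2.1).mono (inter_subset_left : D₂ ∩ O ⊆ D₂)
  rw [← hD] at this
  exact this.congr hfg (hfg hx)

/-- Being a solution is a local property. -/
theorem EFSol_of_local {R : ℝ} {D' : Set (ℝ × ℝ)} {r' m' φ' : ℝ × ℝ → ℝ} (hsub : D' ⊆ Quad R)
    (hrel : ∃ U : Set (ℝ × ℝ), IsOpen U ∧ D' = U ∩ Quad R)
    (hloc : ∀ x ∈ D', ∃ (O D₂ : Set (ℝ × ℝ)) (r₂ m₂ φ₂ : ℝ × ℝ → ℝ), IsOpen O ∧ x ∈ O ∧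
      D' ∩ O = D₂ ∩ O ∧ EFSol R D₂ r₂ m₂ φ₂ ∧ EqOn r' r₂ (D' ∩ O) ∧ EqOn m' m₂ (D' ∩ O) ∧
      EqOn φ' φ₂ (D' ∩ O)) : EFSol R D' r' m' φ' := by
  refine ⟨hsub, hrel, ?_, ?_, ?_, ?_, ?_, ?_, ?_, ?_, ?_, ?_, ?_⟩ <;> intro x hx <;>
    obtain ⟨O, D₂, r₂, m₂, φ₂, hO, hxO, hD, hs, er, em, eφ⟩ := hloc x hx <;>
    have hx1 : x ∈ D' ∩ O := ⟨hx, hxO⟩ <;>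
    have hx2 : x ∈ D₂ := (hD ▸ hx1 : x ∈ D₂ ∩ O).1 <;>
    have ru := pdu_local hO hD er <;>
    have rv := pdv_local hO hD er <;>
    have φu := pdu_local hO hD eφ <;>
    have φv := pdv_local hO hD eφ
  · exact contDiffWithinAt_local hO hD er hs.hr hx1
  · exact contDiffWithinAt_local hO hD em hs.hm hx1
  · exact contDiffWithinAt_local hO hD eφ hs.hphi hx1
  · rw [er hx1]; exact hs.rpos x hx2
  · rw [er hx1, em hx1]; exact hs.mu_ne x hx2
  · have e := pdu_local hO hD rv hx1
    rw [show pdu D' (fun q => pdv D' r' q) x = _ from e, ru hx1, rv hx1, er hx1, em hx1]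
    exact hs.eq_lam x hx2
  · have e := pdv_local hO hD ru hx1
    rw [show pdv D' (fun q => pdu D' r' q) x = _ from e, ru hx1, rv hx1, er hx1, em hx1]
    exact hs.eq_nu x hx2
  · rw [ru hx1, pdu_local hO hD em hx1, φu hx1, er hx1, em hx1]
    exact hs.eq_mu x hx2
  · rw [rv hx1, pdv_local hO hD em hx1, φv hx1, er hx1, em hx1]
    exact hs.eq_mv x hx2
  · rw [pdu_local hO hD (g := fun q => r₂ q * pdv D₂ φ₂ q)
      (fun y hy => by simp only [er hy, φv hy]) hx1, rv hx1, φu hx1, er hx1]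
    exact hs.eq_theta x hx2
  · rw [pdv_local hO hD (g := fun q => r₂ q * pdu D₂ φ₂ q)
      (fun y hy => by simp only [er hy, φu hy]) hx1, ru hx1, φv hx1, er hx1]
    exact hs.eq_zeta x hx2

section Development
variable {R : ℝ} {D : Set (ℝ × ℝ)} {r m φ : ℝ × ℝ → ℝ}

theorem RegOld.cst (ro : RegOld R D r m φ) : ContinuousOn (st D r m φ) D :=
  (ro.ca.continuousOn.prodMk (ro.ck.continuousOn.prodMk ro.cθ.continuousOn)).prodMk
    (ro.cl.continuousOn.prodMk (ro.cζ.continuousOn.prodMk ro.cw.continuousOn))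

/-- A solution of the regularized characteristic problem with data taken from an existing
development coincides with that development on common rectangles. -/
theorem agree (ro : RegOld R D r m φ) (hsub : D ⊆ Quad R) {Z : ℝ × ℝ → Vec3 × Vec3}
    (hZc : Continuous Z) {u u₁ v v₁ : ℝ} (huu : u ≤ u₁) (hvv : v₁ ≤ v)
    (hK : Icc u u₁ ×ˢ Icc v₁ v ⊆ D)
    (hZu : ∀ x ∈ Icc u u₁, ∀ y ∈ Icc v₁ v, HasDerivAt (fun s => (Z (s, y)).1) (vfX (Z (x, y))) x)
    (hZv : ∀ x ∈ Icc u u₁, ∀ y ∈ Icc v₁ v, HasDerivAt (fun s => (Z (x, s)).2) (vfY (Z (x, y))) y)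
    (h1 : ∀ y ∈ Icc v₁ v, (Z (u₁, y)).1 = stX D r m φ (u₁, y))
    (h2 : ∀ x ∈ Icc u u₁, (Z (x, v₁)).2 = stY D r φ (x, v₁)) :
    ∀ q ∈ Icc u u₁ ×ˢ Icc v₁ v, Z q = st D r m φ q := by
  have hcomp : IsCompact (Icc u u₁ ×ˢ Icc v₁ v) := isCompact_Icc.prod isCompact_Icc
  have cs := ro.cst.mono hK
  obtain ⟨B₁, hB₁⟩ := hcomp.exists_bound_of_continuousOn cs
  obtain ⟨B₂, hB₂⟩ := hcomp.exists_bound_of_continuousOn hZc.continuousOn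
  obtain ⟨L₁, -, hL₁, -⟩ := exists_lipschitz_bound contDiff_vfX (max B₁ B₂)
  obtain ⟨L₂, -, hL₂, -⟩ := exists_lipschitz_bound contDiff_vfY (max B₁ B₂)
  have mu : Icc u u₁ ⊆ Iic (-R) := fun x hx =>
    (hsub (hK (show (x, v₁) ∈ Icc u u₁ ×ˢ Icc v₁ v from ⟨hx, ⟨le_rfl, hvv⟩⟩))).1
  have mv : Icc v₁ v ⊆ Ici R := fun y hy =>
    (hsub (hK (show (u, y) ∈ Icc u u₁ ×ˢ Icc v₁ v from ⟨⟨le_rfl, huu⟩, hy⟩))).2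
  refine unique_char (L := max L₁ L₂) (S := Metric.closedBall 0 (max B₁ B₂))
    (hL₁.weaken (le_max_left _ _)) (hL₂.weaken (le_max_right _ _)) huu hvv hZc.continuousOn cs
    (fun q hq => ?_) (fun q hq => ?_) (fun x hx y hy => (hZu x hx y hy).hasDerivWithinAt) ?_
    (fun x hx y hy => (hZv x hx y hy).hasDerivWithinAt) ?_ h1 h2
  · simpa using Or.inr (hB₂ q hq)
  · simpa using Or.inl (hB₁ q hq)
  · intro x hx y hy
    have hq := hK (show (x, y) ∈ _ from ⟨hx, hy⟩)
    exact ((ro.ha _ _ hq).mono mu).prodMk (((ro.hk _ _ hq).mono mu).prodMk ((ro.hθ _ _ hq).mono mu))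
  · intro x hx y hy
    have hq := hK (show (x, y) ∈ _ from ⟨hx, hy⟩)
    exact ((ro.hl _ _ hq).mono mv).prodMk (((ro.hζ _ _ hq).mono mv).prodMk ((ro.hw _ _ hq).mono mv))

theorem HasDerivAt.vec3 {f : ℝ → Vec3} {f' : Vec3} {x : ℝ} (h : HasDerivAt f f' x) :
    HasDerivAt (fun s => (f s).1) f'.1 x ∧ HasDerivAt (fun s => (f s).2.1) f'.2.1 x ∧
      HasDerivAt (fun s => (f s).2.2) f'.2.2 x := by
  have h' := h.hasFDerivAt
  refine ⟨?_, ?_, ?_⟩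
  · simpa using h'.fst.hasDerivAt
  · simpa using h'.snd.fst.hasDerivAt
  · simpa using h'.snd.snd.hasDerivAt

/-- The regularized system obtained by solving the characteristic problem with data on
`{u₁} × (c, e)` and `(α, β) × {v₁}` taken from an existing development. -/
theorem regSys_of_data (h : EFSol R D r m φ) (ro : RegOld R D r m φ) {α β c e u₁ v₁ : ℝ}
    (hu₁ : u₁ ∈ Ioo α β) (hv₁ : v₁ ∈ Ioo c e) (hβ : β ≤ -R) (hc : R ≤ c)
    (hX : ∀ v ∈ Icc c e, (u₁, v) ∈ D) (hY : ∀ u ∈ Icc α β, (u, v₁) ∈ D)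
    {Z : ℝ × ℝ → Vec3 × Vec3} (hZc : Continuous Z)
    (h1 : ∀ v ∈ Icc c e, (Z (u₁, v)).1 = stX D r m φ (u₁, v))
    (h2 : ∀ u ∈ Icc α β, (Z (u, v₁)).2 = stY D r φ (u, v₁))
    (hZu : ∀ u ∈ Ioo α β, ∀ v ∈ Ioo c e, HasDerivAt (fun s => (Z (s, v)).1) (vfX (Z (u, v))) u)
    (hZv : ∀ u ∈ Ioo α β, ∀ v ∈ Ioo c e, HasDerivAt (fun s => (Z (u, s)).2) (vfY (Z (u, v))) v) :
    RegSys α β c e u₁ v₁ (fun u v => (Z (u, v)).1.1) (fun u v => (Z (u, v)).1.2.1)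
      (fun u v => (Z (u, v)).1.2.2) (fun u v => (Z (u, v)).2.1) (fun u v => (Z (u, v)).2.2.1)
      (fun u v => (Z (u, v)).2.2.2)
      (fun v => pdv D (fa D r) (u₁, v)) (fun v => pdv D (fk D r m) (u₁, v))
      (fun v => pdv D (fθ D r φ) (u₁, v)) (fun u => pdu D (fl D r) (u, v₁))
      (fun u => pdu D (fζ D r φ) (u, v₁)) := by
  have hU := uniqueDiffOn_of_relOpen h.relOpen
  have e1 : (1 : WithTop ℕ∞) = 0 + 1 := by norm_num
  have dv : ∀ {f : ℝ × ℝ → ℝ} {g : ℝ → ℝ}, ContDiffOn ℝ 1 f D → (∀ v ∈ Icc c e, g v = f (u₁, v)) →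
      ∀ v ∈ Ioo c e, HasDerivAt g (pdv D f (u₁, v)) v := fun hf hg v hv =>
    ((hasDeriv_v h.relOpen (hf.differentiableOn one_ne_zero)
      (hX v (Ioo_subset_Icc_self hv))).hasDerivAt (Ici_mem_nhds (hc.trans_lt hv.1))).congr_of_eventuallyEq
      (Filter.eventuallyEq_of_mem (Icc_mem_nhds hv.1 hv.2) hg)
  have du : ∀ {f : ℝ × ℝ → ℝ} {g : ℝ → ℝ}, ContDiffOn ℝ 1 f D → (∀ u ∈ Icc α β, g u = f (u, v₁)) →
      ∀ u ∈ Ioo α β, HasDerivAt g (pdu D f (u, v₁)) u := fun hf hg u hu =>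
    ((hasDeriv_u h.relOpen (hf.differentiableOn one_ne_zero)
      (hY u (Ioo_subset_Icc_self hu))).hasDerivAt (Iic_mem_nhds (hu.2.trans_le hβ))).congr_of_eventuallyEq
      (Filter.eventuallyEq_of_mem (Icc_mem_nhds hu.1 hu.2) hg)
  have cdv : ∀ {f : ℝ × ℝ → ℝ}, ContDiffOn ℝ 1 f D →
      ContinuousOn (fun v => pdv D f (u₁, v)) (Ioo c e) := fun hf =>
    (contDiffOn_pdv (n := 0) hU (e1 ▸ hf)).continuousOn.comp (f := fun v => (u₁, v)) (by fun_prop)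
      fun v hv => hX v (Ioo_subset_Icc_self hv)
  have cdu : ∀ {f : ℝ × ℝ → ℝ}, ContDiffOn ℝ 1 f D →
      ContinuousOn (fun u => pdu D f (u, v₁)) (Ioo α β) := fun hf =>
    (contDiffOn_pdu (n := 0) hU (e1 ▸ hf)).continuousOn.comp (f := fun u => (u, v₁)) (by fun_prop)
      fun u hu => hY u (Ioo_subset_Icc_self hu)
  have gu := fun u hu v hv => (hZu u hu v hv).vec3
  have gv := fun u hu v hv => (hZv u hu v hv).vec3
  have d1 : ∀ v ∈ Icc c e, (Z (u₁, v)).1.1 = fa D r (u₁, v) := fun v hv => by rw [h1 v hv]; rfl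
  have d2 : ∀ v ∈ Icc c e, (Z (u₁, v)).1.2.1 = fk D r m (u₁, v) := fun v hv => by rw [h1 v hv]; rfl
  have d3 : ∀ v ∈ Icc c e, (Z (u₁, v)).1.2.2 = fθ D r φ (u₁, v) := fun v hv => by rw [h1 v hv]; rfl
  have d4 : ∀ u ∈ Icc α β, (Z (u, v₁)).2.1 = fl D r (u, v₁) := fun u hu => by rw [h2 u hu]; rfl
  have d5 : ∀ u ∈ Icc α β, (Z (u, v₁)).2.2.1 = fζ D r φ (u, v₁) := fun u hu => by rw [h2 u hu]; rfl
  have d6 : ∀ u ∈ Icc α β, (Z (u, v₁)).2.2.2 = fw r (u, v₁) := fun u hu => by rw [h2 u hu]; rfl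
  -- `w = log r` along `u = u₁`, since `∂ᵥ exp (2w) = 2a` for both functions
  have d7 : ∀ v ∈ Ioo c e, (Z (u₁, v)).2.2.2 = fw r (u₁, v) := by
    intro v hv
    have key := eq_of_hasDerivAt_eq (d := fun v => 2 * fa D r (u₁, v))
      (f := fun v => exp (2 * (Z (u₁, v)).2.2.2)) (g := fun v => exp (2 * fw r (u₁, v))) hv₁
      (fun y hy => ((gv u₁ hu₁ y hy).2.2.const_mul 2).exp.congr_deriv (by
        simp only [vfY, exp_neg, d1 y (Ioo_subset_Icc_self hy)]; field_simp))
      (fun y hy => ((((ro.hw _ _ (hX y (Ioo_subset_Icc_self hy))).hasDerivAt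
        (Ici_mem_nhds (hc.trans_lt hy.1))).const_mul 2).exp).congr_deriv (by
        simp only [exp_neg]; field_simp))
      (by simp only [d6 u₁ (Ioo_subset_Icc_self hu₁)]) hv
    have := exp_injective key
    linarith
  refine ⟨hu₁, hv₁, by fun_prop, by fun_prop, by fun_prop, by fun_prop, by fun_prop, by fun_prop,
    fun u hu v hv => (gu u hu v hv).1, fun u hu v hv => (gu u hu v hv).2.1,
    fun u hu v hv => (gu u hu v hv).2.2, fun u hu v hv => (gv u hu v hv).1,
    fun u hu v hv => (gv u hu v hv).2.1, fun u hu v hv => (gv u hu v hv).2.2,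
    dv ro.ca d1, dv ro.ck d2, dv ro.cθ d3, du ro.cl d4, du ro.cζ d5, ?_, cdv ro.ca, cdv ro.ck,
    cdv ro.cθ, cdu ro.cl, cdu ro.cζ, ?_⟩
  · intro u hu
    have hu' := Ioo_subset_Icc_self hu
    simp only [d4 u hu', d6 u hu']
    exact ((ro.hwu _ _ (hY u hu')).hasDerivAt
      (Iic_mem_nhds (hu.2.trans_le hβ))).congr_of_eventuallyEq
      (Filter.eventuallyEq_of_mem (Icc_mem_nhds hu.1 hu.2) d6)
  · intro v hv
    have hv' := Ioo_subset_Icc_self hv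
    simp only [d1 v hv', d2 v hv', d3 v hv', d7 v hv]
    exact ro.constr _ (hX v hv')

end Development

/-! ### Continuation -/

section Development
variable {R C M m₀ : ℝ} {D : Set (ℝ × ℝ)} {r m φ : ℝ × ℝ → ℝ}

/-- Continuation past a point `p = (u₀, v₀)` with a bounded regularized state in its punctured past:
the characteristic problem is solved from the corner `(u₀ + η, v₀ - η)`, with `η` so small compared
with the lifespan for data of size `N + 1` that the solution covers a neighbourhood of `p`. -/
theorem extend (h : EFSol R D r m φ) (hic : CharIC R C M m₀ D r m φ) (sg : Signs R D r m)
    {u₀ v₀ N : ℝ} (hu₀ : u₀ < -R) (hv₀ : R < v₀) (hN0 : 0 ≤ N)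
    (hJ : ∀ u v, u₀ ≤ u → u ≤ -R → R ≤ v → v ≤ v₀ → (u, v) ≠ (u₀, v₀) → (u, v) ∈ D)
    (hN : ∀ u v, u₀ ≤ u → u ≤ -R → R ≤ v → v ≤ v₀ → (u, v) ≠ (u₀, v₀) →
      ‖st D r m φ (u, v)‖ ≤ N) :
    ∃ (D' : Set (ℝ × ℝ)) (r' m' φ' : ℝ × ℝ → ℝ), IsPastSet R D' ∧ D ⊆ D' ∧ (u₀, v₀) ∈ D' ∧
      EFSol R D' r' m' φ' ∧ EqOn r' r D ∧ EqOn m' m D ∧ EqOn φ' φ D := by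
  classical
  have ro := regOld h sg
  obtain ⟨ε, hε, hloc⟩ := exists_local contDiff_vfX contDiff_vfY (N := N + 1) (by linarith)
  obtain ⟨η, hη0, hη1, hη2, hη3⟩ : ∃ η > 0, 2 * η ≤ ε ∧ 3 * η ≤ -R - u₀ ∧ 3 * η ≤ v₀ - R := by
    refine ⟨min (ε / 2) (min ((-R - u₀) / 3) ((v₀ - R) / 3)), ?_, ?_, ?_, ?_⟩
    · exact lt_min (by linarith) (lt_min (by linarith) (by linarith))
    · have := min_le_left (ε / 2) (min ((-R - u₀) / 3) ((v₀ - R) / 3)); linarith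
    · have := (min_le_right (ε / 2) (min ((-R - u₀) / 3) ((v₀ - R) / 3))).trans (min_le_left _ _)
      linarith
    · have := (min_le_right (ε / 2) (min ((-R - u₀) / 3) ((v₀ - R) / 3))).trans (min_le_right _ _)
      linarith
  set u₁ := u₀ + η with hu₁
  set v₁ := v₀ - η with hv₁
  obtain ⟨U, hUo, hDU⟩ := h.relOpen
  -- near an interior point with state at most `N` the development exists with state at most `N + 1`
  have near : ∀ u v, u < -R → R < v → (u, v) ∈ D → ‖st D r m φ (u, v)‖ ≤ N →
      ∀ᶠ q in 𝓝 (u, v), q ∈ D ∧ ‖st D r m φ q‖ ≤ N + 1 := by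
    intro u v hu hv hq hb
    have hDn : D ∈ 𝓝 (u, v) := by
      rw [hDU] at hq ⊢
      exact inter_mem (hUo.mem_nhds hq.1) (prod_mem_nhds (Iic_mem_nhds hu) (Ici_mem_nhds hv))
    have hc := (ro.cst.continuousAt hDn).norm
    filter_upwards [hDn, hc.eventually (gt_mem_nhds (by linarith : ‖st D r m φ (u, v)‖ < N + 1))]
      with q h1 h2
    exact ⟨h1, h2.le⟩
  have hne1 : (u₁, v₀) ≠ (u₀, v₀) := fun e => by
    have := congrArg Prod.fst e; simp only at this; linarith
  have hne2 : (u₀, v₁) ≠ (u₀, v₀) := fun e => by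
    have := congrArg Prod.snd e; simp only at this; linarith
  have n1 := near u₁ v₀ (by linarith) hv₀ (hJ _ _ (by linarith) (by linarith) hv₀.le le_rfl hne1)
    (hN _ _ (by linarith) (by linarith) hv₀.le le_rfl hne1)
  have n2 := near u₀ v₁ hu₀ (by linarith) (hJ _ _ le_rfl hu₀.le (by linarith) (by linarith) hne2)
    (hN _ _ le_rfl hu₀.le (by linarith) (by linarith) hne2)
  obtain ⟨δ₁, hδ₁, nn1⟩ := Metric.eventually_nhds_iff.1 n1
  obtain ⟨δ₂, hδ₂, nn2⟩ := Metric.eventually_nhds_iff.1 n2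
  -- `δ` is the amount by which both initial segments can be prolonged beyond the past of `p`
  obtain ⟨δ, hδ0, hδη, hδ1, hδ2⟩ : ∃ δ > 0, δ ≤ η ∧ δ < δ₁ ∧ δ < δ₂ := by
    refine ⟨min η (min (δ₁ / 2) (δ₂ / 2)), lt_min hη0 (lt_min (by linarith) (by linarith)),
      min_le_left _ _, ?_, ?_⟩
    · exact ((min_le_right _ _).trans (min_le_left _ _)).trans_lt (by linarith)
    · exact ((min_le_right _ _).trans (min_le_right _ _)).trans_lt (by linarith)
  have hX : ∀ v ∈ Icc (v₁ - δ) (v₀ + δ), (u₁, v) ∈ D ∧ ‖st D r m φ (u₁, v)‖ ≤ N + 1 := by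
    intro v hv
    rcases le_or_gt v v₀ with hv' | hv'
    · have hne : (u₁, v) ≠ (u₀, v₀) := fun e => by
        have := congrArg Prod.fst e; simp only at this; linarith
      exact ⟨hJ _ _ (by linarith) (by linarith) (by linarith [hv.1]) hv' hne,
        (hN _ _ (by linarith) (by linarith) (by linarith [hv.1]) hv' hne).trans (by linarith)⟩
    · refine nn1 ?_
      rw [Prod.dist_eq, dist_self, max_eq_right dist_nonneg, Real.dist_eq, abs_of_pos (by linarith)]
      linarith [hv.2]
  have hY : ∀ u ∈ Icc (u₀ - δ) (u₁ + δ), (u, v₁) ∈ D ∧ ‖st D r m φ (u, v₁)‖ ≤ N + 1 := by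
    intro u hu
    rcases le_or_gt u₀ u with hu' | hu'
    · have hne : (u, v₁) ≠ (u₀, v₀) := fun e => by
        have := congrArg Prod.snd e; simp only at this; linarith
      exact ⟨hJ _ _ hu' (by linarith [hu.2]) (by linarith) (by linarith) hne,
        (hN _ _ hu' (by linarith [hu.2]) (by linarith) (by linarith) hne).trans (by linarith)⟩
    · refine nn2 ?_
      rw [Prod.dist_eq, dist_self, max_eq_left dist_nonneg, Real.dist_eq, abs_of_neg (by linarith)]
      linarith [hu.1]
  have hu₁I : u₁ ∈ Ioo (u₀ - δ) (u₁ + δ) := ⟨by linarith, by linarith⟩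
  have hv₁I : v₁ ∈ Ioo (v₁ - δ) (v₀ + δ) := ⟨by linarith, by linarith⟩
  obtain ⟨Z, hZc, -, h1, h2, hZu, hZv⟩ := hloc (u₀ - δ) (u₁ + δ) (v₁ - δ) (v₀ + δ) u₁ v₁
    (fun v => stX D r m φ (u₁, v)) (fun u => stY D r φ (u, v₁))
    (Ioo_subset_Icc_self hu₁I) (Ioo_subset_Icc_self hv₁I)
    (by linarith) (by linarith) (by linarith) (by linarith)
    ((continuous_fst.comp_continuousOn ro.cst).comp (f := fun v => (u₁, v)) (by fun_prop)
      fun v hv => (hX v hv).1)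
    ((continuous_snd.comp_continuousOn ro.cst).comp (f := fun u => (u, v₁)) (by fun_prop)
      fun u hu => (hY u hu).1)
    (fun v hv => (norm_fst_le _).trans (hX v hv).2) (fun u hu => (norm_snd_le _).trans (hY u hu).2)
  have S := regSys_of_data h ro hu₁I hv₁I (by linarith) (by linarith) (fun v hv => (hX v hv).1)
    (fun u hu => (hY u hu).1) hZc h1 h2 hZu hZv
  have one_two : (1 : WithTop ℕ∞) ≤ 2 := by norm_num
  have dφ := (h.hphi.of_le one_two).differentiableOn one_ne_zero
  obtain ⟨ψ, hψ0, hψv, hψ⟩ := S.exists_sol (φ₀ := fun u => φ (u, v₁)) (fun u hu => by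
    have hu' := Ioo_subset_Icc_self hu
    have hq := (hY u hu').1
    have e : Z (u, v₁) = ((Z (u, v₁)).1, stY D r φ (u, v₁)) := by rw [← h2 u hu']
    refine ((hasDeriv_u h.relOpen dφ hq).hasDerivAt
      (Iic_mem_nhds (by linarith [hu.2]))).congr_deriv ?_
    rw [e]
    change _ = fζ D r φ (u, v₁) * exp (-fw r (u, v₁))
    rw [exp_neg, ro.ew _ hq]
    have := (sg.r_pos _ hq).ne'
    simp only [fζ]
    field_simp)
  -- the new piece; where it meets `D`, the rectangle down to the initial segments lies in `D`
  set W : Set (ℝ × ℝ) := Ioo (u₀ - δ) u₁ ×ˢ Ioo v₁ (v₀ + δ) with hW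
  have hWo : IsOpen W := isOpen_Ioo.prod isOpen_Ioo
  have hWr : W ⊆ ORect (u₀ - δ) (u₁ + δ) (v₁ - δ) (v₀ + δ) := by
    rintro ⟨u, v⟩ ⟨hu, hv⟩
    exact ⟨⟨hu.1, hu.2.trans (by linarith)⟩, ⟨lt_trans (by linarith) hv.1, hv.2⟩⟩
  have hWQ : W ⊆ Quad R := by
    rintro ⟨u, v⟩ ⟨hu, hv⟩
    have h3 := hu.2
    have h4 := hv.1
    simp only at h3 h4
    exact ⟨(by linarith : u ≤ -R), (by linarith : R ≤ v)⟩
  have hpos : ∀ q ∈ W, 0 < (Z (q.1, q.2)).1.1 := by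
    rintro ⟨u, v⟩ hq
    have hv' := (hWr hq).2
    have hanti := antitoneOn_Icc (a := u) (b := u₁) (f := fun s => (Z (s, v)).1.1)
      (fun s hs => (S.ha s ⟨hq.1.1.trans_le hs.1, hs.2.trans_lt hu₁I.2⟩ v hv').hasDerivWithinAt)
      (fun s _ => neg_nonpos.2 (exp_pos _).le) ⟨le_rfl, hq.1.2.le⟩ ⟨hq.1.2.le, le_rfl⟩ hq.1.2.le
    have hx := (hX v (Ioo_subset_Icc_self hv')).1
    have e : (Z (u₁, v)).1.1 = fa D r (u₁, v) := by
      rw [h1 v (Ioo_subset_Icc_self hv')]; rfl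
    have : 0 < fa D r (u₁, v) := mul_pos (sg.r_pos _ hx) (sg.lam _ hx)
    simp only at hanti ⊢
    linarith
  have hnew := hψ R W hWo hWr hWQ hpos
  -- uniqueness on the overlap
  have hag : ∀ q ∈ D ∩ W, exp (Z (q.1, q.2)).2.2.2 = r q ∧
      (exp (Z (q.1, q.2)).2.2.2 - (Z (q.1, q.2)).1.1 * exp (-(Z (q.1, q.2)).1.2.1)) / 2 = m q ∧
      ψ q.1 q.2 = φ q := by
    rintro ⟨u, v⟩ ⟨hq, hqW⟩
    have hmem : ∀ x ∈ Icc u u₁, ∀ y ∈ Icc v₁ v,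
        x ∈ Ioo (u₀ - δ) (u₁ + δ) ∧ y ∈ Ioo (v₁ - δ) (v₀ + δ) := fun x hx y hy =>
      ⟨⟨hqW.1.1.trans_le hx.1, hx.2.trans_lt hu₁I.2⟩, ⟨hv₁I.1.trans_le hy.1, hy.2.trans_lt hqW.2.2⟩⟩
    have hK : Icc u u₁ ×ˢ Icc v₁ v ⊆ D := fun x hx =>
      past_rect hic hq ⟨hx.1.1, hx.1.2.trans (by linarith)⟩
        ⟨le_trans (by linarith) hx.2.1, hx.2.2⟩
    have hZs := agree ro h.subset hZc hqW.1.2.le hqW.2.1.le hK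
      (fun x hx y hy => hZu x (hmem x hx y hy).1 y (hmem x hx y hy).2)
      (fun x hx y hy => hZv x (hmem x hx y hy).1 y (hmem x hx y hy).2)
      (fun y hy => h1 y (Ioo_subset_Icc_self
        (hmem u₁ ⟨hqW.1.2.le, le_rfl⟩ y hy).2))
      (fun x hx => h2 x (Ioo_subset_Icc_self
        (hmem x hx v₁ ⟨le_rfl, hqW.2.1.le⟩).1))
    have hu : u ∈ Icc u u₁ := ⟨le_rfl, hqW.1.2.le⟩
    have hv : v ∈ Icc v₁ v := ⟨hqW.2.1.le, le_rfl⟩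
    have hr := (sg.r_pos _ hq).ne'
    have hμ := (sg.one_mu _ hq).ne'
    have hl := (sg.lam _ hq).ne'
    have E := hZs (u, v) ⟨hu, hv⟩
    refine ⟨?_, ?_, ?_⟩
    · simp only [E]
      exact ro.ew _ hq
    · simp only [E]
      change (exp (fw r (u, v)) - fa D r (u, v) * exp (-fk D r m (u, v))) / 2 = _
      rw [exp_neg, ro.ew _ hq, ro.ek _ hq]
      simp only [fa]
      field_simp
      ring
    · have hd : ∀ y ∈ Icc v₁ v, HasDerivWithinAt (fun s => ψ u s - φ (u, s)) 0 (Icc v₁ v) y := by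
        intro y hy
        have hyD := hK (show (u, y) ∈ _ from ⟨hu, hy⟩)
        have Ey := hZs (u, y) ⟨hu, hy⟩
        have hry := (sg.r_pos _ hyD).ne'
        refine ((hψv u (hmem u hu y hy).1 y (hmem u hu y hy).2).hasDerivWithinAt.fun_sub
          ((hasDeriv_v h.relOpen dφ hyD).mono fun s hs =>
            (le_trans (by linarith) hs.1 : R ≤ s))).congr_deriv ?_
        simp only [Ey]
        change fθ D r φ (u, y) * exp (-fw r (u, y)) - _ = 0
        rw [exp_neg, ro.ew _ hyD]
        simp only [fθ]
        field_simp
        ring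
      have h0 := abs_le_of_deriv (B := fun _ => 0) (B' := fun _ => 0) hd
        (fun y _ => hasDerivWithinAt_const _ _ _) (fun y _ => by simp) hqW.2.1.le
        (by simp [hψ0])
      have := abs_nonpos_iff.1 h0
      simp only at this ⊢
      linarith
  refine ⟨D ∪ W, fun q => if q ∈ D then r q else exp (Z (q.1, q.2)).2.2.2,
    fun q => if q ∈ D then m q else
      (exp (Z (q.1, q.2)).2.2.2 - (Z (q.1, q.2)).1.1 * exp (-(Z (q.1, q.2)).1.2.1)) / 2,
    fun q => if q ∈ D then φ q else ψ q.1 q.2, ?_, subset_union_left, ?_, ?_,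
    fun q hq => if_pos hq, fun q hq => if_pos hq, fun q hq => if_pos hq⟩
  · rintro ⟨u, v⟩ hq ⟨u', v'⟩ hQ huu hvv
    rcases hq with hq | hq
    · exact Or.inl (hic.past _ hq _ hQ huu hvv)
    · have hb := hWr hq
      by_cases c1 : u₁ ≤ u'
      · exact Or.inl (hic.past _ (hX v (Ioo_subset_Icc_self hb.2)).1 _ hQ c1 hvv)
      by_cases c2 : v' ≤ v₁
      · exact Or.inl (hic.past _ (hY u (Ioo_subset_Icc_self hb.1)).1 _ hQ huu c2)
      · exact Or.inr ⟨⟨hq.1.1.trans_le huu, not_le.1 c1⟩, ⟨not_le.1 c2, lt_of_le_of_lt hvv hq.2.2⟩⟩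
  · exact Or.inr ⟨⟨by linarith, by linarith⟩, ⟨by linarith, by linarith⟩⟩
  · refine EFSol_of_local (union_subset h.subset hWQ) ⟨U ∪ W, hUo.union hWo, ?_⟩ ?_
    · rw [union_inter_distrib_right, ← hDU, inter_eq_left.2 hWQ]
    · rintro x (hx | hx)
      · have hDo : (D ∪ W) ∩ U = D ∩ U := by
          refine Subset.antisymm ?_ (inter_subset_inter_left _ subset_union_left)
          rintro y ⟨hy | hy, hyU⟩
          · exact ⟨hy, hyU⟩
          · exact ⟨hDU ▸ ⟨hyU, hWQ hy⟩, hyU⟩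
        refine ⟨U, D, r, m, φ, hUo, (hDU ▸ hx : x ∈ U ∩ Quad R).1, hDo, h, ?_, ?_, ?_⟩ <;>
          rw [hDo] <;> exact fun q hq => if_pos hq.1
      · have hWo' : (D ∪ W) ∩ W = W ∩ W := by rw [union_inter_cancel_right, inter_self]
        refine ⟨W, W, _, _, _, hWo, hx, hWo', hnew, ?_, ?_, ?_⟩ <;>
          rintro q ⟨-, hq⟩ <;> by_cases hqD : q ∈ D <;> simp only [hqD, if_true, if_false]
        · exact (hag q ⟨hqD, hq⟩).1.symm
        · exact (hag q ⟨hqD, hq⟩).2.1.symm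
        · exact (hag q ⟨hqD, hq⟩).2.2.symm

end Development

end

/-- Extension criterion.  Let `(r, m, φ)` be the maximal
development on `D` of characteristic initial conditions with parameters
`C`, `M`, `m₀`, with `R > 2M`.  If `p = (u₀,v₀) ∈ Q_R` satisfies
`J⁻(p) \ {p} ⊆ D` and both `r` and `m` are bounded above on `J⁻(p) \ {p}`,
then `p ∈ D`. -/
theorem extension_criterion (R C M m₀ : ℝ) (hR : 0 < R) (hC : 0 < C)
    (hM : 0 < M) (hm₀ : m₀ ∈ Icc 0 M) (hRM : R > 2 * M)
    (D : Set (ℝ × ℝ)) (r m φ : ℝ × ℝ → ℝ) (hsol : EFSol R D r m φ)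
    (hic : CharIC R C M m₀ D r m φ) (hmax : IsMaximalDev R D r m φ)
    (u₀ v₀ : ℝ) (hp : ((u₀, v₀) : ℝ × ℝ) ∈ Quad R)
    (hJ : {q ∈ Quad R | u₀ ≤ q.1 ∧ q.2 ≤ v₀} \ {((u₀, v₀) : ℝ × ℝ)} ⊆ D)
    (hrb : BddAbove (r '' ({q ∈ Quad R | u₀ ≤ q.1 ∧ q.2 ≤ v₀} \ {((u₀, v₀) : ℝ × ℝ)})))
    (hmb : BddAbove (m '' ({q ∈ Quad R | u₀ ≤ q.1 ∧ q.2 ≤ v₀} \ {((u₀, v₀) : ℝ × ℝ)}))) :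
    ((u₀, v₀) : ℝ × ℝ) ∈ D := by
  by_contra hpD
  have hm := hm₀.2
  have hRm : 2 * m₀ < R := by linarith
  have hu : u₀ < -R := lt_of_le_of_ne hp.1 fun e => hpD (e ▸ hic.ray_out v₀ hp.2)
  have hv : R < v₀ := lt_of_le_of_ne hp.2 fun e => hpD (e ▸ hic.ray_in u₀ hp.1)
  obtain ⟨ρ, hρ⟩ := hrb
  have sg := signs hsol hic hRm
  obtain ⟨N, hN0, hN⟩ := apriori hR hsol hic hRm (P := log ρ) hu.le hv.le fun q hq h1 h2 =>
    log_le_log (sg.r_pos q hq) (hρ ⟨q, ⟨⟨hsol.subset hq, h1, h2⟩, fun e => hpD (e ▸ hq)⟩, rfl⟩)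
  have hJ' : ∀ u v, u₀ ≤ u → u ≤ -R → R ≤ v → v ≤ v₀ → (u, v) ≠ (u₀, v₀) → (u, v) ∈ D :=
    fun u v h1 h2 h3 h4 h5 => hJ ⟨⟨⟨h2, h3⟩, h1, h4⟩, h5⟩
  obtain ⟨D', r', m', φ', hpast, hDD, hpD', hsol', er, em, eφ⟩ := extend hsol hic sg hu hv hN0 hJ'
    fun u v h1 h2 h3 h4 h5 => hN _ (hJ' u v h1 h2 h3 h4 h5) h1 h4
  exact hpD ((hmax D' r' m' φ' hpast (fun v hv => hDD (hic.ray_out v hv))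
    (fun u hu => hDD (hic.ray_in u hu)) hsol'
    (fun v hv => ⟨er (hic.ray_out v hv), em (hic.ray_out v hv), eφ (hic.ray_out v hv)⟩)
    (fun u hu => ⟨er (hic.ray_in u hu), em (hic.ray_in u hu), eφ (hic.ray_in u hu)⟩)).1 hpD')
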